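/- arXiv:1607.05850 — 8 statements merged into one kernel-verified Lean document; each statement's English description precedes it below -/
import Mathlib

section
/- Let Γ = ((V,E),(V₁,V₂)) be a game graph, Ω a prefix-independent objective, p ∈ {1,2} a player and op the opposing player. If X ⊆ V is p-closed in Γ, then every vertex that is winning for player op in the game on the induced game graph Γ[X] with objective Ω is also winning for player op in the game on Γ with objective Ω, i.e., W_op(Γ[X],Ω) ⊆ W_op(Γ,Ω). -/
open Classical

universe u

/-- A game graph: a directed graph `E` on vertex set `V` together with the set
`P1` of player-1 vertices; player-2 vertices are the complement of `P1`. -/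
structure GameGraph (V : Type u) where
  E : V → V → Prop
  P1 : Set V

/-- The two players. -/
inductive Player : Type where
  | one : Player
  | two : Player

/-- The opponent of a player. -/
def Player.opp : Player → Player
  | .one => .two
  | .two => .one

/-- Select the first argument for player 1 and the second for player 2. -/
def Player.sel {α : Sort*} : Player → α → α → α
  | .one, a, _ => a
  | .two, _, b => b

variable {V : Type u}

/-- The vertices belonging to a player. -/
def GameGraph.verts (Γ : GameGraph V) : Player → Set V
  | .one => Γ.P1
  | .two => Γ.P1ᶜ

/-- Every vertex has at least one outgoing edge. -/
def GameGraph.NoDead (Γ : GameGraph V) : Prop := ∀ v, ∃ w, Γ.E v w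

/-- A (general, history-dependent) strategy: given the history of the play so far
(the vertices visited strictly before the current one) and the current vertex,
choose a next vertex. -/
abbrev Strat (V : Type u) : Type u := List V → V → V

/-- A strategy is memoryless if it depends only on the current vertex. -/
def Memoryless (σ : Strat V) : Prop := ∀ h h' v, σ h v = σ h' v

/-- A strategy is valid for player `p` if at every vertex of player `p` it
chooses a successor of that vertex. -/
def GameGraph.ValidFor (Γ : GameGraph V) (p : Player) (σ : Strat V) : Prop :=
  ∀ hist v, v ∈ Γ.verts p → Γ.E v (σ hist v)

/-- One step of the play: the player-1 strategy moves at `P1`-vertices, the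
player-2 strategy elsewhere. -/
noncomputable def GameGraph.step (Γ : GameGraph V) (σ π : Strat V)
    (hist : List V) (v : V) : V :=
  if v ∈ Γ.P1 then σ hist v else π hist v

/-- The play determined by a start vertex `v`, a player-1 strategy `σ` and a
player-2 strategy `π`, together with its history. -/
noncomputable def GameGraph.playAux (Γ : GameGraph V) (σ π : Strat V) (v : V) :
    ℕ → List V × V
  | 0 => ([], v)
  | n + 1 =>
      let q := Γ.playAux σ π v n
      (q.1 ++ [q.2], Γ.step σ π q.1 q.2)

/-- The play determined by a start vertex `v`, a player-1 strategy `σ` and a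
player-2 strategy `π`. -/
noncomputable def GameGraph.play (Γ : GameGraph V) (σ π : Strat V) (v : V)
    (n : ℕ) : V :=
  (Γ.playAux σ π v n).2

/-- The play from `v` where player `p` uses strategy `σ` and the opponent uses
strategy `τ`. -/
noncomputable def GameGraph.winPlay (Γ : GameGraph V) (p : Player)
    (σ τ : Strat V) (v : V) : ℕ → V :=
  Γ.play (p.sel σ τ) (p.sel τ σ) v

/-- Player `p` wins from `v` for objective `Ω`: player 1 wants the resulting
play to lie in `Ω`, player 2 wants it to lie outside `Ω`. -/
def GameGraph.Wins (Γ : GameGraph V) (p : Player) (Ω : Set (ℕ → V)) (v : V) :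
    Prop :=
  ∃ σ, Γ.ValidFor p σ ∧ ∀ τ, Γ.ValidFor p.opp τ →
    p.sel (Γ.winPlay p σ τ v ∈ Ω) (Γ.winPlay p σ τ v ∉ Ω)

/-- A player-`p` dominion for objective `Ω`: a nonempty set from each of whose
vertices player `p` has a winning strategy that moreover keeps the play inside
the set. -/
def GameGraph.Dominion (Γ : GameGraph V) (p : Player) (Ω : Set (ℕ → V))
    (D : Set V) : Prop :=
  D.Nonempty ∧ ∀ v ∈ D, ∃ σ, Γ.ValidFor p σ ∧ ∀ τ, Γ.ValidFor p.opp τ →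
    (p.sel (Γ.winPlay p σ τ v ∈ Ω) (Γ.winPlay p σ τ v ∉ Ω)) ∧
    ∀ n, Γ.winPlay p σ τ v n ∈ D

/-- The player-`p` attractor of `U`: the least set containing `U`, every
player-`p` vertex with some successor in it, and every opponent vertex all of
whose successors are in it. -/
inductive GameGraph.Attr (Γ : GameGraph V) (p : Player) (U : Set V) : V → Prop
  | base {v} : v ∈ U → GameGraph.Attr Γ p U v
  | own {v w} : v ∈ Γ.verts p → Γ.E v w → GameGraph.Attr Γ p U w →
      GameGraph.Attr Γ p U v
  | opp {v} : v ∈ Γ.verts p.opp → (∀ w, Γ.E v w → GameGraph.Attr Γ p U w) →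
      GameGraph.Attr Γ p U v

/-- The player-`p` attractor, as a set. -/
def GameGraph.attr (Γ : GameGraph V) (p : Player) (U : Set V) : Set V :=
  {v | Γ.Attr p U v}

/-- The iterative construction `R_j` of the player-`p` attractor. -/
def GameGraph.attrIter (Γ : GameGraph V) (p : Player) (U : Set V) : ℕ → Set V
  | 0 => U
  | n + 1 =>
      Γ.attrIter p U n
        ∪ {v | v ∈ Γ.verts p ∧ ∃ w, Γ.E v w ∧ w ∈ Γ.attrIter p U n}
        ∪ {v | v ∈ Γ.verts p.opp ∧ ∀ w, Γ.E v w → w ∈ Γ.attrIter p U n}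

/-- The `p`-rank of `v` with respect to `U`: the least `j` with `v ∈ R_j`, and
`∞` if there is no such `j`. -/
noncomputable def GameGraph.rank (Γ : GameGraph V) (p : Player) (U : Set V)
    (v : V) : ℕ∞ :=
  ⨅ n ∈ {n : ℕ | v ∈ Γ.attrIter p U n}, (n : ℕ∞)

/-- A set `U` is `p`-closed: every player-`p` vertex of `U` has all its
successors in `U`, and every opponent vertex of `U` has some successor in `U`. -/
def GameGraph.PClosed (Γ : GameGraph V) (p : Player) (U : Set V) : Prop :=
  ∀ v ∈ U, (v ∈ Γ.verts p → ∀ w, Γ.E v w → w ∈ U) ∧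
    (v ∈ Γ.verts p.opp → ∃ w, Γ.E v w ∧ w ∈ U)

/-- The induced game graph on a subset `U` of the vertices. -/
def GameGraph.sub (Γ : GameGraph V) (U : Set V) : GameGraph U where
  E a b := Γ.E (a : V) (b : V)
  P1 := {a : U | (a : V) ∈ Γ.P1}

/-- The game graph with the roles of the two players exchanged. -/
def GameGraph.swap (Γ : GameGraph V) : GameGraph V where
  E := Γ.E
  P1 := Γ.P1ᶜ

/-- The set of vertices occurring infinitely often in a play. -/
def InfOcc (ω : ℕ → V) : Set V := {v | ∀ n, ∃ m, n ≤ m ∧ ω m = v}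

/-- An objective is prefix-independent if membership of a play depends only on
the set of vertices visited infinitely often. -/
def PrefixIndep (Ω : Set (ℕ → V)) : Prop :=
  ∀ ω ω', InfOcc ω = InfOcc ω' → (ω ∈ Ω ↔ ω' ∈ Ω)

/-- The Büchi objective with target set `T`. -/
def BuchiObj (T : Set V) : Set (ℕ → V) := {ω | (InfOcc ω ∩ T).Nonempty}

/-- The generalized Büchi objective with target sets `T i`. -/
def GenBuchiObj {ι : Sort*} (T : ι → Set V) : Set (ℕ → V) :=
  {ω | ∀ i, (InfOcc ω ∩ T i).Nonempty}

/-- The disjunctive co-Büchi objective with target sets `T i`. -/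
def DisjCoBuchiObj {ι : Sort*} (T : ι → Set V) : Set (ℕ → V) :=
  {ω | ∃ i, InfOcc ω ∩ T i = ∅}

/-- The GR(1) objective with assumption sets `L t` and guarantee sets `U ℓ`. -/
def GR1Obj {ι₁ ι₂ : Sort*} (L : ι₁ → Set V) (U : ι₂ → Set V) : Set (ℕ → V) :=
  {ω | (∀ t, (InfOcc ω ∩ L t).Nonempty) → ∀ ℓ, (InfOcc ω ∩ U ℓ).Nonempty}

/-- An objective on the full vertex set, restricted to plays of the induced
game graph on `U`. -/
def subObj (U : Set V) (Ω : Set (ℕ → V)) : Set (ℕ → ↥U) :=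
  {ω | (fun n => (ω n : V)) ∈ Ω}

/-- The out-degree of a vertex. -/
noncomputable def GameGraph.outDeg (Γ : GameGraph V) (v : V) : ℕ :=
  {w | Γ.E v w}.ncard

/-- A hierarchical graph decomposition of a game graph `Γ`: for every vertex
`v`, `idx v` enumerates the incoming edges of `v` (i.e., their sources) by the
positions `0, …, indeg(v) − 1`, listing edges from player-2 vertices first. -/
structure HierDecomp (Γ : GameGraph V) where
  idx : V → V → ℕ
  idx_inj : ∀ v u u', Γ.E u v → Γ.E u' v → idx v u = idx v u' → u = u'
  idx_lt : ∀ v u, Γ.E u v → idx v u < {u' | Γ.E u' v}.ncard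
  p2_first : ∀ v u u', Γ.E u v → Γ.E u' v → u ∉ Γ.P1 → u' ∈ Γ.P1 →
      idx v u < idx v u'

/-- The `i`-th level `Γ_i = (G_i, (V₁,V₂))` of the hierarchical graph
decomposition: `G_i` keeps all outgoing edges of vertices of out-degree at most
`2^i`, and the first `2^i` incoming edges of every vertex. -/
def HierDecomp.graph {Γ : GameGraph V} (H : HierDecomp Γ) (i : ℕ) :
    GameGraph V where
  E u v := Γ.E u v ∧ (Γ.outDeg u ≤ 2 ^ i ∨ H.idx v u < 2 ^ i)
  P1 := Γ.P1

/-- The exception set `Z_i`: player-2 vertices with no outgoing edge in `G_i`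
together with player-1 vertices with more than `2^i` outgoing edges in `G`. -/
def HierDecomp.Z {Γ : GameGraph V} (H : HierDecomp Γ) (i : ℕ) : Set V :=
  {v | v ∉ Γ.P1 ∧ ¬ ∃ w, (H.graph i).E v w} ∪
    {v | v ∈ Γ.P1 ∧ 2 ^ i < Γ.outDeg v}

/-- Cyclic successor `ℓ ⊕ 1` on `Fin k`. -/
def finSucc {k : ℕ} (ℓ : Fin k) : Fin k :=
  ⟨(ℓ.val + 1) % k, Nat.mod_lt _ (Nat.lt_of_le_of_lt (Nat.zero_le _) ℓ.isLt)⟩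

/-- The bound `n̄ = min (h − 1) |V ∖ T|` of the progress measure. -/
noncomputable def nbar (h : ℕ) (T : Set V) : ℕ := min (h - 1) Tᶜ.ncard

/-- The value of the best successor of `v` for the player owning `v`. -/
noncomputable def GameGraph.best (Γ : GameGraph V) {k : ℕ} (T : Fin k → Set V)
    (ρ : Fin k → V → ℕ∞) (ℓ : Fin k) (v : V) : ℕ∞ :=
  let ℓ' := if v ∈ T ℓ then finSucc ℓ else ℓ
  if v ∈ Γ.P1 then ⨅ w ∈ {w | Γ.E v w}, ρ ℓ' w
  else ⨆ w ∈ {w | Γ.E v w}, ρ ℓ' w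

/-- The increment operation `incr` of the progress measure (for the pair
`(v, ℓ)`). -/
noncomputable def pmIncr (h : ℕ) {k : ℕ} (T : Fin k → Set V) (ℓ : Fin k)
    (v : V) (x : ℕ∞) : ℕ∞ :=
  if v ∈ T ℓ ∧ x ≠ ⊤ then 0
  else if x < (nbar h (T ℓ) : ℕ∞) then x + 1 else ⊤

/-- The update operator of the progress measure: update `ρ ℓ v` to
`max (ρ ℓ v) (incr (best v))`. -/
noncomputable def GameGraph.pmStep (Γ : GameGraph V) (h : ℕ) {k : ℕ}
    (T : Fin k → Set V) (ρ : Fin k → V → ℕ∞) : Fin k → V → ℕ∞ :=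
  fun ℓ v => max (ρ ℓ v) (pmIncr h T ℓ v (Γ.best T ρ ℓ v))

/-- `ρ` is the progress measure associated with `Γ`, `T` and `h`: the least
fixed point (starting from the all-zero functions, i.e., the least one) of the
update operator. -/
def GameGraph.IsProgressMeasure (Γ : GameGraph V) (h : ℕ) {k : ℕ}
    (T : Fin k → Set V) (ρ : Fin k → V → ℕ∞) : Prop :=
  Γ.pmStep h T ρ = ρ ∧ ∀ ρ', Γ.pmStep h T ρ' = ρ' → ∀ ℓ v, ρ ℓ v ≤ ρ' ℓ v

/-- Player `p` can force, from `v`, that the play stays in `D` forever and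
visits every target set `T i` infinitely often. -/
def GameGraph.ForcesStayBuchi (Γ : GameGraph V) (p : Player) (D : Set V)
    {ι : Sort*} (T : ι → Set V) (v : V) : Prop :=
  ∃ σ, Γ.ValidFor p σ ∧ ∀ τ, Γ.ValidFor p.opp τ →
    (∀ n, Γ.winPlay p σ τ v n ∈ D) ∧
    ∀ i n, ∃ m, n ≤ m ∧ Γ.winPlay p σ τ v m ∈ T i

theorem play_sub_coe {V : Type u} (Γ : GameGraph V) (X : Set V) (s1 s2 : Strat V)
    (t1 t2 : Strat ↥X)
    (h : ∀ hist x, (((Γ.sub X).step t1 t2 hist x : ↥X) : V)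
      = Γ.step s1 s2 (hist.map Subtype.val) (x : V)) (v : ↥X) :
    Γ.play s1 s2 (v : V) = fun n => (((Γ.sub X).play t1 t2 v n : ↥X) : V) := by
  have key : ∀ n, Γ.playAux s1 s2 (v : V) n =
      (((Γ.sub X).playAux t1 t2 v n).1.map Subtype.val,
        (((Γ.sub X).playAux t1 t2 v n).2 : V)) := by
    intro n
    induction n with
    | zero => simp [GameGraph.playAux]
    | succ n ih => simp [GameGraph.playAux, ih, h]
  funext n
  simp [GameGraph.play, key]

theorem strat_lift {V : Type u} (Γ : GameGraph V) (hΓ : Γ.NoDead) (X : Set V)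
    (q : Player) (σ : Strat ↥X) (v : ↥X) (hσ : (Γ.sub X).ValidFor q σ) :
    ∃ σ' : Strat V, Γ.ValidFor q σ' ∧
      ∀ (hist : List ↥X) (x : ↥X), σ' (hist.map Subtype.val) (x : V) = (σ hist x : V) := by
  let r : V → ↥X := fun x => if h : x ∈ X then ⟨x, h⟩ else v
  have hr : ∀ x : ↥X, r (x : V) = x := fun x => by simp [r]
  refine ⟨fun hist x => if x ∈ X then (σ (hist.map r) (r x) : V) else (hΓ x).choose, ?_, ?_⟩
  · intro hist x hx
    by_cases h : x ∈ X
    · simp only [h, if_true]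
      have h2 : r x = ⟨x, h⟩ := hr ⟨x, h⟩
      rw [h2]
      exact hσ _ ⟨x, h⟩ (by cases q <;> exact hx)
    · simp only [h, if_false]
      exact (hΓ x).choose_spec
  · intro hist x
    have : r ∘ Subtype.val = id := funext hr
    simp only [hr, List.map_map, this, List.map_id, x.2, if_true]

theorem strat_restrict {V : Type u} (Γ : GameGraph V) (X : Set V)
    (p : Player) (hX : Γ.PClosed p X) (τ : Strat V) (v : ↥X) (hτ : Γ.ValidFor p τ) :
    ∃ τ' : Strat ↥X, (Γ.sub X).ValidFor p τ' ∧
      ∀ (hist : List ↥X) (x : ↥X), (x : V) ∈ Γ.verts p →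
        (τ' hist x : V) = τ (hist.map Subtype.val) (x : V) := by
  have hin : ∀ (hist : List ↥X) (x : ↥X), (x : V) ∈ Γ.verts p →
      τ (hist.map Subtype.val) (x : V) ∈ X := fun hist x hx =>
    (hX x x.2).1 hx _ (hτ _ _ hx)
  let τ' : Strat ↥X := fun hist x =>
    if h : τ (hist.map Subtype.val) (x : V) ∈ X then ⟨_, h⟩ else v
  have heq : ∀ (hist : List ↥X) (x : ↥X), (x : V) ∈ Γ.verts p →
        (τ' hist x : V) = τ (hist.map Subtype.val) (x : V) := by
    intro hist x hx
    simp only [τ', hin hist x hx, dif_pos]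
  refine ⟨τ', ?_, heq⟩
  intro hist x hx
  have hx' : (x : V) ∈ Γ.verts p := by cases p <;> exact hx
  change Γ.E (x : V) (τ' hist x : V)
  rw [heq hist x hx']
  exact hτ _ _ hx'

/-- If `X` is `p`-closed, then every vertex winning for the
opponent `op` in the induced subgame `Γ[X]` (with the restricted prefix
independent objective) is winning for `op` in `Γ`. -/
theorem win_closed_subgame {V : Type u} [Finite V]
    (Γ : GameGraph V) (hΓ : Γ.NoDead) (Ω : Set (ℕ → V))
    (hΩ : PrefixIndep Ω) (p : Player) (X : Set V) (hX : Γ.PClosed p X) :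
    ∀ v : ↥X, (Γ.sub X).Wins p.opp (subObj X Ω) v → Γ.Wins p.opp Ω (v : V) := by
  rintro v ⟨σ, hσ, hwin⟩
  obtain ⟨σ', hσ', hs⟩ := strat_lift Γ hΓ X p.opp σ v hσ
  refine ⟨σ', hσ', fun τ hτ => ?_⟩
  have hpp : p.opp.opp = p := by cases p <;> rfl
  rw [hpp] at hτ hwin
  obtain ⟨τ', hτ', ht⟩ := strat_restrict Γ X p hX τ v hτ
  have hw := hwin τ' hτ'
  have hplay : Γ.winPlay p.opp σ' τ (v : V)
      = fun n => (((Γ.sub X).winPlay p.opp σ τ' v n : ↥X) : V) := by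
    apply play_sub_coe
    intro hist x
    cases p
    · by_cases hx : (x : V) ∈ Γ.P1
      · have hx2 : x ∈ (Γ.sub X).P1 := hx
        simp only [GameGraph.step, hx, hx2, if_true]
        exact ht hist x hx
      · have hx2 : x ∉ (Γ.sub X).P1 := hx
        simp only [GameGraph.step, hx, hx2, if_false]
        exact (hs hist x).symm
    · by_cases hx : (x : V) ∈ Γ.P1
      · have hx2 : x ∈ (Γ.sub X).P1 := hx
        simp only [GameGraph.step, hx, hx2, if_true]
        exact (hs hist x).symm
      · have hx2 : x ∉ (Γ.sub X).P1 := hx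
        simp only [GameGraph.step, hx, hx2, if_false]
        exact ht hist x hx
  rw [hplay]
  cases p <;> exact hw
end

section
/- Let Γ = ((V,E),(V₁,V₂)) be a game graph, Ω a prefix-independent objective, p ∈ {1,2} a player and op the opposing player. Let X be a subset of the winning set W_p(Γ,Ω) of player p and let A = Attr_p(Γ,X) be its player-p attractor. Then W_p(Γ,Ω) = A ∪ W_p(Γ[V∖A],Ω) and W_op(Γ,Ω) = W_op(Γ[V∖A],Ω). -/
open Classical

universe u

variable {V : Type u}

/-! Helper material for the proof. -/

/-- The list of the first `n` vertices of a sequence. -/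
def preL {V : Type u} (ω : ℕ → V) (n : ℕ) : List V := (List.range n).map ω

theorem preL_zero {V : Type u} (ω : ℕ → V) : preL ω 0 = [] := rfl

theorem preL_length {V : Type u} (ω : ℕ → V) (n : ℕ) : (preL ω n).length = n := by
  simp [preL]

theorem preL_succ {V : Type u} (ω : ℕ → V) (n : ℕ) :
    preL ω (n + 1) = preL ω n ++ [ω n] := by
  simp [preL, List.range_succ]

theorem preL_cons {V : Type u} (ω : ℕ → V) (n : ℕ) :
    preL ω (n + 1) = ω 0 :: preL (fun i => ω (i + 1)) n := by
  simp [preL, List.range_succ_eq_map, Function.comp_def]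

/-- The strategy `σ` wins from `v`, path formulation. -/
def WinsBy {V : Type u} (E : V → V → Prop) (P : Set V) (W : Set (ℕ → V))
    (σ : List V → V → V) (v : V) : Prop :=
  (∀ h u, u ∈ P → E u (σ h u)) ∧
  ∀ ω : ℕ → V, ω 0 = v → (∀ n, E (ω n) (ω (n + 1))) →
    (∀ n, ω n ∈ P → ω (n + 1) = σ (preL ω n) (ω n)) → ω ∈ W

/-- Winning from `v`, path formulation. -/
def Good {V : Type u} (E : V → V → Prop) (P : Set V) (W : Set (ℕ → V))
    (v : V) : Prop := ∃ σ, WinsBy E P W σ v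

/-- The winning plays of a player. -/
def Player.obj {V : Type u} (p : Player) (Ω : Set (ℕ → V)) : Set (ℕ → V) :=
  p.sel Ω Ωᶜ

theorem step_own {V : Type u} (Γ : GameGraph V) (p : Player) (σ τ : Strat V)
    (h : List V) (u : V) (hu : u ∈ Γ.verts p) :
    Γ.step (p.sel σ τ) (p.sel τ σ) h u = σ h u := by
  cases p <;> simp_all [GameGraph.verts, GameGraph.step, Player.sel]

theorem step_opp {V : Type u} (Γ : GameGraph V) (p : Player) (σ τ : Strat V)
    (h : List V) (u : V) (hu : u ∉ Γ.verts p) :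
    Γ.step (p.sel σ τ) (p.sel τ σ) h u = τ h u := by
  cases p <;> simp_all [GameGraph.verts, GameGraph.step, Player.sel]

theorem verts_opp {V : Type u} (Γ : GameGraph V) (p : Player) :
    Γ.verts p.opp = (Γ.verts p)ᶜ := by
  cases p <;> simp [GameGraph.verts, Player.opp]

theorem sel_iff {V : Type u} (p : Player) (Ω : Set (ℕ → V)) (ω : ℕ → V) :
    p.sel (ω ∈ Ω) (ω ∉ Ω) ↔ ω ∈ p.obj Ω := by
  cases p <;> simp [Player.obj, Player.sel]

theorem playAux_fst {V : Type u} (Γ : GameGraph V) (σ π : Strat V) (v : V) (n : ℕ) :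
    (Γ.playAux σ π v n).1 = preL (Γ.play σ π v) n := by
  induction n with
  | zero => rfl
  | succ n ih =>
    rw [preL_succ, ← ih]
    rfl

theorem play_succ {V : Type u} (Γ : GameGraph V) (σ π : Strat V) (v : V) (n : ℕ) :
    Γ.play σ π v (n + 1) =
      Γ.step σ π (preL (Γ.play σ π v) n) (Γ.play σ π v n) := by
  rw [← playAux_fst]
  rfl

theorem wins_iff {V : Type u} (Γ : GameGraph V) (hΓ : Γ.NoDead) (p : Player)
    (Ω : Set (ℕ → V)) (v : V) :
    Γ.Wins p Ω v ↔ Good Γ.E (Γ.verts p) (p.obj Ω) v := by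
  constructor
  · rintro ⟨σ, hσ, hw⟩
    refine ⟨σ, hσ, fun ω h0 hE hc => ?_⟩
    choose nx hnx using hΓ
    let τ : Strat V := fun h u => if u = ω h.length then ω (h.length + 1) else nx u
    have hτ : Γ.ValidFor p.opp τ := by
      intro h u _
      by_cases hu : u = ω h.length
      · simp only [τ, if_pos hu]
        rw [hu]
        exact hE _
      · simp only [τ, if_neg hu]
        exact hnx u
    have key := (sel_iff p Ω _).1 (hw τ hτ)
    have : Γ.winPlay p σ τ v = ω := by
      have aux : ∀ n, preL (Γ.winPlay p σ τ v) n = preL ω n ∧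
          Γ.winPlay p σ τ v n = ω n := by
        intro n
        induction n with
        | zero => exact ⟨rfl, h0.symm⟩
        | succ n ih =>
          refine ⟨by rw [preL_succ, preL_succ, ih.1, ih.2], ?_⟩
          unfold GameGraph.winPlay at ih ⊢
          rw [play_succ, ih.1, ih.2]
          by_cases hp : ω n ∈ Γ.verts p
          · rw [step_own _ _ _ _ _ _ hp, hc n hp]
          · rw [step_opp _ _ _ _ _ _ hp]
            simp [τ, preL_length]
      funext n
      exact (aux n).2
    rwa [this] at key
  · rintro ⟨σ, hσ, hw⟩
    refine ⟨σ, hσ, fun τ hτ => (sel_iff p Ω _).2 (hw _ rfl ?_ ?_)⟩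
    · intro n
      unfold GameGraph.winPlay
      rw [play_succ]
      by_cases hp : Γ.play (p.sel σ τ) (p.sel τ σ) v n ∈ Γ.verts p
      · rw [step_own _ _ _ _ _ _ hp]
        exact hσ _ _ hp
      · rw [step_opp _ _ _ _ _ _ hp]
        refine hτ _ _ ?_
        rw [verts_opp]
        exact hp
    · intro n hp
      unfold GameGraph.winPlay at hp ⊢
      rw [play_succ, step_own _ _ _ _ _ _ hp]

theorem wins_disj {V : Type u} (Γ : GameGraph V) (p : Player)
    (Ω : Set (ℕ → V)) (v : V) (h1 : Γ.Wins p Ω v) (h2 : Γ.Wins p.opp Ω v) : False := by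
  obtain ⟨σ, hσ, h1⟩ := h1
  obtain ⟨τ, hτ, h2⟩ := h2
  have a := h1 τ hτ
  have b := h2 σ (by cases p <;> exact hσ)
  cases p
  · exact b a
  · exact a b

/-- Play `σ0` until `S` is hit, then switch to the strategy `ρ`. -/
noncomputable def glue {V : Type u} (S : Set V) (ρ : V → List V → V → V) :
    (List V → V → V) → List V → V → V
  | σ0, [], v => if v ∈ S then ρ v [] v else σ0 [] v
  | σ0, a :: h, v => if a ∈ S then ρ a (a :: h) v else
      glue S ρ (fun h => σ0 (a :: h)) h v

theorem glue_valid {V : Type u} (E : V → V → Prop) (P S : Set V)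
    (ρ : V → List V → V → V) (hρ : ∀ s ∈ S, ∀ h u, u ∈ P → E u (ρ s h u))
    (h : List V) : ∀ (σ0 : List V → V → V), (∀ h u, u ∈ P → E u (σ0 h u)) →
      ∀ u, u ∈ P → E u (glue S ρ σ0 h u) := by
  induction h with
  | nil =>
    intro σ0 h0 u hu
    unfold glue
    split_ifs with hs
    · exact hρ _ hs _ _ hu
    · exact h0 _ _ hu
  | cons a h ih =>
    intro σ0 h0 u hu
    unfold glue
    split_ifs with hs
    · exact hρ _ hs _ _ hu
    · exact ih _ (fun h u hu => h0 _ _ hu) u hu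

theorem glue_miss {V : Type u} (S : Set V) (ρ : V → List V → V → V) (n : ℕ) :
    ∀ (ω : ℕ → V) (σ0 : List V → V → V), (∀ i, ω i ∉ S) →
      glue S ρ σ0 (preL ω n) (ω n) = σ0 (preL ω n) (ω n) := by
  induction n with
  | zero =>
    intro ω σ0 h
    simp [preL_zero, glue, h]
  | succ n ih =>
    intro ω σ0 h
    rw [preL_cons, glue, if_neg (h 0)]
    exact ih (fun i => ω (i + 1)) _ (fun i => h _)

theorem glue_hit {V : Type u} (S : Set V) (ρ : V → List V → V → V) (k : ℕ) :
    ∀ (ω : ℕ → V) (σ0 : List V → V → V) (n : ℕ), (∀ i < k, ω i ∉ S) → ω k ∈ S →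
      glue S ρ σ0 (preL ω (n + k)) (ω (n + k)) =
        ρ (ω k) (preL (fun i => ω (i + k)) n) (ω (n + k)) := by
  induction k with
  | zero =>
    intro ω σ0 n _ hk
    cases n with
    | zero => simp [preL_zero, glue, hk]
    | succ n =>
      have : preL (fun i => ω (i + 0)) (n + 1) = preL ω (n + 1) := rfl
      rw [this, Nat.add_zero, preL_cons, glue, if_pos hk]
  | succ k ih =>
    intro ω σ0 n h hk
    rw [← Nat.add_assoc, preL_cons, glue, if_neg (h 0 (by omega))]
    exact ih (fun i => ω (i + 1)) _ n (fun i hi => h _ (by omega)) hk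

theorem tail_iter {V : Type u} {W : Set (ℕ → V)}
    (hW : ∀ ω : ℕ → V, (fun n => ω (n + 1)) ∈ W ↔ ω ∈ W) (k : ℕ) :
    ∀ ω : ℕ → V, (fun n => ω (n + k)) ∈ W ↔ ω ∈ W := by
  induction k with
  | zero => intro ω; rfl
  | succ k ih =>
    intro ω
    rw [← hW ω, ← ih (fun n => ω (n + 1))]
    rfl

theorem good_glue {V : Type u} {E : V → V → Prop} {P : Set V} {W : Set (ℕ → V)}
    (hW : ∀ ω : ℕ → V, (fun n => ω (n + 1)) ∈ W ↔ ω ∈ W)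
    (v : V) (σ0 : List V → V → V) (h0 : ∀ h u, u ∈ P → E u (σ0 h u))
    (H : ∀ ω : ℕ → V, ω 0 = v → (∀ n, E (ω n) (ω (n + 1))) →
      (∀ n, ω n ∈ P → ω (n + 1) = σ0 (preL ω n) (ω n)) →
      (∀ n, ¬ Good E P W (ω n)) → ω ∈ W) : Good E P W v := by
  have hex : ∀ s, ∃ σ, Good E P W s → WinsBy E P W σ s := by
    intro s
    by_cases hs : Good E P W s
    · obtain ⟨σ, h⟩ := hs
      exact ⟨σ, fun _ => h⟩
    · exact ⟨σ0, fun h => absurd h hs⟩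
  choose ρ hρ using hex
  refine ⟨glue {s | Good E P W s} ρ σ0, ?_, ?_⟩
  · intro h u hu
    exact glue_valid E P _ ρ (fun s hs => (hρ s hs).1) h σ0 h0 u hu
  · intro ω hv hE hc
    by_cases hh : ∃ n, Good E P W (ω n)
    · have hk := Nat.find_spec hh
      have hm := fun i (hi : i < Nat.find hh) => Nat.find_min hh hi
      generalize Nat.find hh = k at hk hm
      rw [← tail_iter hW k]
      refine (hρ _ hk).2 _ ?_ ?_ ?_
      · simp
      · intro n
        have := hE (n + k)
        rwa [Nat.add_right_comm] at this
      · intro n hn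
        have := hc (n + k) hn
        rw [glue_hit _ ρ k ω σ0 n hm hk, Nat.add_right_comm] at this
        exact this
    · push Not at hh
      refine H ω hv hE ?_ hh
      intro n hn
      rw [hc n hn]
      exact glue_miss _ ρ n ω σ0 hh

theorem winsBy_next {V : Type u} {E : V → V → Prop} {P : Set V} {W : Set (ℕ → V)}
    (hW : ∀ ω : ℕ → V, (fun n => ω (n + 1)) ∈ W ↔ ω ∈ W)
    {σ : List V → V → V} {v w : V} (h : WinsBy E P W σ v) (hE : E v w)
    (hw : v ∈ P → w = σ [] v) : WinsBy E P W (fun l => σ (v :: l)) w := by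
  refine ⟨fun l u hu => h.1 _ _ hu, fun ω h0 hE' hc => ?_⟩
  let η : ℕ → V := fun n => Nat.casesOn n v ω
  have : η ∈ W := by
    refine h.2 η rfl ?_ ?_
    · intro n
      cases n with
      | zero => show E v (ω 0); rw [h0]; exact hE
      | succ n => exact hE' n
    · intro n hn
      cases n with
      | zero => show ω 0 = _; rw [h0]; exact hw hn
      | succ n =>
        rw [preL_cons]
        exact hc n hn
  exact (hW η).2 this

theorem tail_obj {V : Type u} {Ω : Set (ℕ → V)} (hΩ : PrefixIndep Ω) (p : Player)
    (ω : ℕ → V) : (fun n => ω (n + 1)) ∈ p.obj Ω ↔ ω ∈ p.obj Ω := by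
  have : InfOcc (fun n => ω (n + 1)) = InfOcc ω := by
    ext v
    constructor
    · intro h n
      obtain ⟨m, hm, e⟩ := h n
      exact ⟨m + 1, by omega, e⟩
    · intro h n
      obtain ⟨m, hm, e⟩ := h (n + 1)
      obtain ⟨m, rfl⟩ : ∃ m', m = m' + 1 := ⟨m - 1, by omega⟩
      exact ⟨m, by omega, e⟩
  have h2 := hΩ _ _ this
  cases p
  · exact h2
  · exact not_congr h2

theorem attr_good {V : Type u} (Γ : GameGraph V) (hΓ : Γ.NoDead) {Ω : Set (ℕ → V)}
    (hΩ : PrefixIndep Ω) (p : Player) (X : Set V)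
    (hX : ∀ v ∈ X, Good Γ.E (Γ.verts p) (p.obj Ω) v) (v : V) (hv : Γ.Attr p X v) :
    Good Γ.E (Γ.verts p) (p.obj Ω) v := by
  choose nx hnx using hΓ
  induction hv with
  | base h => exact hX _ h
  | @own v w hv hE _ ih =>
    refine good_glue (tail_obj hΩ p) v (fun _ u => if u = v then w else nx u) ?_ ?_
    · intro h u hu
      by_cases e : u = v
      · simp only [if_pos e]; rw [e]; exact hE
      · simp only [if_neg e]; exact hnx u
    · intro ω h0 _ hc hn
      refine absurd ih ?_
      have := hc 0 (by rw [h0]; exact hv)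
      simp only [h0, if_true] at this
      rw [← this]
      exact hn _
  | @opp v hv _ ih =>
    refine good_glue (tail_obj hΩ p) v (fun _ u => nx u) (fun _ u _ => hnx u) ?_
    intro ω h0 hE _ hn
    have h1 := hE 0
    rw [h0] at h1
    exact absurd (ih _ h1) (hn _)

theorem preL_map {V : Type u} {U : Set V} (ω : ℕ → U) (n : ℕ) :
    preL (fun i => (ω i : V)) n = (preL ω n).map Subtype.val := by
  simp [preL, Function.comp_def]

theorem mem_subObj {V : Type u} {U : Set V} (p : Player) (Ω : Set (ℕ → V)) (ω : ℕ → U) :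
    ω ∈ p.obj (subObj U Ω) ↔ (fun n => (ω n : V)) ∈ p.obj Ω := by
  cases p <;> rfl

theorem mem_sub_verts {V : Type u} (Γ : GameGraph V) {U : Set V} (p : Player) (u : U) :
    u ∈ (Γ.sub U).verts p ↔ (u : V) ∈ Γ.verts p := by
  cases p <;> rfl

/-- Restricting a winning strategy to a subgame it never leaves. -/
theorem good_restrict {V : Type u} (Γ : GameGraph V) {Ω : Set (ℕ → V)}
    (hΩ : PrefixIndep Ω) (q : Player) (U : Set V) (hU : (Γ.sub U).NoDead)
    (hq : ∀ u ∈ U, u ∈ Γ.verts q → ∀ w, Γ.E u w →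
      Good Γ.E (Γ.verts q) (q.obj Ω) w → w ∈ U)
    (v : V) (hv : v ∈ U) (h : Good Γ.E (Γ.verts q) (q.obj Ω) v) :
    Good (Γ.sub U).E ((Γ.sub U).verts q) (q.obj (subObj U Ω)) ⟨v, hv⟩ := by
  choose nx hnx using hU
  obtain ⟨σ, hσ⟩ := h
  refine ⟨fun l u => if hw : σ (l.map Subtype.val) u ∈ U then ⟨_, hw⟩ else nx u, ?_, ?_⟩
  · intro l u hu
    by_cases hw : σ (l.map Subtype.val) u ∈ U
    · simp only [dif_pos hw]
      exact hσ.1 _ _ ((mem_sub_verts Γ q u).1 hu)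
    · simp only [dif_neg hw]
      exact hnx u
  · intro ω h0 hE hc
    rw [mem_subObj]
    have step : ∀ n, WinsBy Γ.E (Γ.verts q) (q.obj Ω)
        (fun l => σ (preL (fun i => (ω i : V)) n ++ l)) (ω n) →
        (ω n : V) ∈ Γ.verts q →
        (ω (n + 1) : V) = σ (preL (fun i => (ω i : V)) n) (ω n) := by
      intro n hn hp
      have e : Γ.E (ω n) (σ (preL (fun i => (ω i : V)) n) (ω n)) := hσ.1 _ _ hp
      have g := winsBy_next (tail_obj hΩ q) hn e (fun _ => by simp)
      have m := hq _ (ω n).2 hp _ e ⟨_, g⟩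
      rw [hc n ((mem_sub_verts Γ q _).2 hp)]
      rw [preL_map] at m ⊢
      simp only [dif_pos m]
    have all : ∀ n, WinsBy Γ.E (Γ.verts q) (q.obj Ω)
        (fun l => σ (preL (fun i => (ω i : V)) n ++ l)) (ω n) := by
      intro n
      induction n with
      | zero =>
        rw [h0]
        exact hσ
      | succ n ih =>
        have := winsBy_next (tail_obj hΩ q) ih (hE n)
          (fun hp => by rw [step n ih hp]; simp)
        simpa [preL_succ] using this
    exact hσ.2 _ (by rw [h0]) hE (fun n hp => step n (all n) hp)

/-- Extending a winning strategy of a subgame; leaving the subgame is harmless. -/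
theorem good_extend {V : Type u} (Γ : GameGraph V) (hΓ : Γ.NoDead) {Ω : Set (ℕ → V)}
    (hΩ : PrefixIndep Ω) (q : Player) (U : Set V)
    (hq : ∀ u ∈ U, u ∉ Γ.verts q → ∀ w, Γ.E u w →
      w ∈ U ∨ Good Γ.E (Γ.verts q) (q.obj Ω) w)
    (v : V) (hv : v ∈ U)
    (h : Good (Γ.sub U).E ((Γ.sub U).verts q) (q.obj (subObj U Ω)) ⟨v, hv⟩) :
    Good Γ.E (Γ.verts q) (q.obj Ω) v := by
  choose nx hnx using hΓ
  obtain ⟨σ, hσ⟩ := h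
  let c : V → U := fun x => if hx : x ∈ U then ⟨x, hx⟩ else ⟨v, hv⟩
  have hc' : ∀ u : U, c u = u := fun u => by simp [c]
  refine good_glue (tail_obj hΩ q) v
    (fun l u => if u ∈ U then ((σ (l.map c) (c u) : U) : V) else nx u) ?_ ?_
  · intro l u hu
    by_cases hw : u ∈ U
    · simp only [if_pos hw]
      have := hσ.1 (l.map c) ⟨u, hw⟩ ((mem_sub_verts Γ q _).2 hu)
      rw [hc' ⟨u, hw⟩]
      exact this
    · simp only [if_neg hw]
      exact hnx u
  · intro ω h0 hE hc hn
    have inU : ∀ n, ω n ∈ U := by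
      intro n
      induction n with
      | zero => rw [h0]; exact hv
      | succ n ih =>
        by_cases hp : ω n ∈ Γ.verts q
        · rw [hc n hp]
          simp only [if_pos ih]
          exact Subtype.property _
        · exact (hq _ ih hp _ (hE n)).resolve_right (hn _)
    obtain ⟨η, rfl⟩ : ∃ η : ℕ → U, ω = fun n => (η n : V) :=
      ⟨fun n => ⟨ω n, inU n⟩, rfl⟩
    rw [← mem_subObj]
    refine hσ.2 η (Subtype.ext h0) hE ?_
    intro n hp
    have := hc n ((mem_sub_verts Γ q _).1 hp)
    simp only [if_pos (η n).2, preL_map, List.map_map, hc'] at this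
    have e : (c ∘ Subtype.val : U → U) = id := funext hc'
    rw [e, List.map_id] at this
    exact Subtype.ext this

/-- If `X` is contained in the winning set of player `p` and
`A = Attr_p(Γ,X)`, then `W_p(Γ) = A ∪ W_p(Γ[V∖A])` and
`W_op(Γ) = W_op(Γ[V∖A])`. -/
theorem winning_set_attractor_decomposition {V : Type u} [Finite V]
    (Γ : GameGraph V) (hΓ : Γ.NoDead) (Ω : Set (ℕ → V))
    (hΩ : PrefixIndep Ω) (p : Player) (X : Set V)
    (hX : ∀ v ∈ X, Γ.Wins p Ω v) :
    (∀ v, Γ.Wins p Ω v ↔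
        (v ∈ Γ.attr p X ∨ ∃ hv : v ∈ (Γ.attr p X)ᶜ,
          (Γ.sub (Γ.attr p X)ᶜ).Wins p (subObj (Γ.attr p X)ᶜ Ω) ⟨v, hv⟩)) ∧
    (∀ v, Γ.Wins p.opp Ω v ↔
        ∃ hv : v ∈ (Γ.attr p X)ᶜ,
          (Γ.sub (Γ.attr p X)ᶜ).Wins p.opp (subObj (Γ.attr p X)ᶜ Ω) ⟨v, hv⟩) := by
  have hA : ∀ v, v ∈ Γ.attr p X → Good Γ.E (Γ.verts p) (p.obj Ω) v := fun v hv =>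
    attr_good Γ hΓ hΩ p X (fun v hv => (wins_iff Γ hΓ p Ω v).1 (hX v hv)) v hv
  have hdis : ∀ v, v ∈ Γ.attr p X → ¬ Good Γ.E (Γ.verts p.opp) (p.opp.obj Ω) v :=
    fun v hv h => wins_disj Γ p Ω v ((wins_iff Γ hΓ p Ω v).2 (hA v hv))
      ((wins_iff Γ hΓ p.opp Ω v).2 h)
  have hcl : ∀ u ∈ (Γ.attr p X)ᶜ, u ∈ Γ.verts p → ∀ w, Γ.E u w → w ∈ (Γ.attr p X)ᶜ :=
    fun u hu hp w hE hw => hu (GameGraph.Attr.own hp hE hw)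
  have hsub : (Γ.sub (Γ.attr p X)ᶜ).NoDead := by
    rintro ⟨u, hu⟩
    by_cases hp : u ∈ Γ.verts p
    · obtain ⟨w, hw⟩ := hΓ u
      exact ⟨⟨w, hcl u hu hp w hw⟩, hw⟩
    · by_contra hcon
      refine hu (GameGraph.Attr.opp (by rw [verts_opp]; exact hp) ?_)
      intro w hw
      by_contra hw'
      exact hcon ⟨⟨w, hw'⟩, hw⟩
  simp only [wins_iff Γ hΓ, wins_iff _ hsub]
  refine ⟨fun v => ⟨fun h => ?_, ?_⟩, fun v => ⟨fun h => ?_, ?_⟩⟩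
  · by_cases hv : v ∈ Γ.attr p X
    · exact Or.inl hv
    · exact Or.inr ⟨hv, good_restrict Γ hΩ p _ hsub
        (fun u hu hp w hE _ => hcl u hu hp w hE) v hv h⟩
  · rintro (hv | ⟨hv, h⟩)
    · exact hA v hv
    · refine good_extend Γ hΓ hΩ p _ (fun u _ _ w _ => ?_) v hv h
      by_cases hw : w ∈ Γ.attr p X
      · exact Or.inr (hA w hw)
      · exact Or.inl hw
  · have hv : v ∈ (Γ.attr p X)ᶜ := fun hv => hdis v hv h
    exact ⟨hv, good_restrict Γ hΩ p.opp _ hsub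
      (fun u _ _ w _ hg hw => hdis w hw hg) v hv h⟩
  · rintro ⟨hv, h⟩
    refine good_extend Γ hΓ hΩ p.opp _ (fun u hu hp w hE => Or.inl ?_) v hv h
    rw [verts_opp] at hp
    exact hcl u hu (not_not.1 hp) w hE
end

section
/- Let Γ = ((V,E),(V₁,V₂)) be a game graph with generalized Büchi objective ⋀_{ℓ=1}^k Büchi(T_ℓ) for target sets T₁,…,T_k ⊆ V. Suppose V' ⊆ V is 2-closed in Γ and for every ℓ ∈ {1,…,k} we have V' ⊆ Attr₁(Γ[V'], T_ℓ ∩ V'). Then every vertex of V' is winning for player 1 in the game on Γ with objective ⋀_{ℓ=1}^k Büchi(T_ℓ). -/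
open Classical

universe u

variable {V : Type u}

theorem gb_iter_mono {V : Type u} (Γ : GameGraph V) (p : Player) (U : Set V) :
    Monotone (Γ.attrIter p U) :=
  monotone_nat_of_le_succ fun n _ hx => Or.inl (Or.inl hx)

theorem gb_attr_iter {V : Type u} [Finite V] (Γ : GameGraph V) (p : Player) (U : Set V)
    (v : V) (h : Γ.Attr p U v) : ∃ n, v ∈ Γ.attrIter p U n := by
  induction h with
  | base h => exact ⟨0, h⟩
  | own hv hE _ ih =>
    obtain ⟨n, hn⟩ := ih
    exact ⟨n + 1, Or.inl (Or.inr ⟨hv, _, hE, hn⟩)⟩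
  | @opp v hv _ ih =>
    have h2 : ∀ w, ∃ n, Γ.E v w → w ∈ Γ.attrIter p U n := by
      intro w
      by_cases hE : Γ.E v w
      · obtain ⟨n, hn⟩ := ih w hE
        exact ⟨n, fun _ => hn⟩
      · exact ⟨0, fun h => absurd h hE⟩
    choose f hf using h2
    obtain ⟨B, hB⟩ := (Set.finite_range f).bddAbove
    exact ⟨B + 1, Or.inr ⟨hv, fun w hw =>
      gb_iter_mono Γ p U (hB ⟨w, rfl⟩) (hf w hw)⟩⟩

theorem gb_rank {V : Type u} [Finite V] (Γ : GameGraph V) (U : Set V)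
    (h : ∀ v, Γ.Attr Player.one U v) : ∃ r : V → ℕ, ∀ v, v ∉ U →
      (v ∈ Γ.P1 → ∃ w, Γ.E v w ∧ r w < r v) ∧ (v ∉ Γ.P1 → ∀ w, Γ.E v w → r w < r v) := by
  have h1 := fun v => gb_attr_iter Γ Player.one U v (h v)
  refine ⟨fun v => Nat.find (h1 v), fun v hv => ?_⟩
  have hs := Nat.find_spec (h1 v)
  have hm : ∀ m, m < Nat.find (h1 v) → v ∉ Γ.attrIter Player.one U m :=
    fun m hm => Nat.find_min (h1 v) hm
  have hle : ∀ w m, w ∈ Γ.attrIter Player.one U m → Nat.find (h1 w) ≤ m :=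
    fun w m h => Nat.find_min' (h1 w) h
  beta_reduce
  generalize Nat.find (h1 v) = n at hs hm
  cases n with
  | zero => exact absurd hs hv
  | succ n =>
    rcases hs with (hs | ⟨hp, w, hE, hw⟩) | ⟨hp, hw⟩
    · exact absurd hs (hm n (Nat.lt_succ_self n))
    · exact ⟨fun _ => ⟨w, hE, Nat.lt_succ_of_le (hle w n hw)⟩, fun h => absurd hp h⟩
    · exact ⟨fun h => absurd h hp, fun _ w hE => Nat.lt_succ_of_le (hle w n (hw w hE))⟩

theorem gb_inf {V : Type u} [Finite V] (ω : ℕ → V) (T : Set V)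
    (h : ∀ n, ∃ m, n ≤ m ∧ ω m ∈ T) : (InfOcc ω ∩ T).Nonempty := by
  by_contra hne
  have h2 : ∀ w, ∃ n, w ∈ T → ∀ m, n ≤ m → ω m ≠ w := by
    intro w
    by_contra hc
    push Not at hc
    exact hne ⟨w, fun n => (hc n).2, (hc 0).1⟩
  choose f hf using h2
  obtain ⟨B, hB⟩ := (Set.finite_range f).bddAbove
  obtain ⟨m, hm, hT⟩ := h B
  exact hf (ω m) hT m ((hB ⟨ω m, rfl⟩).trans hm) rfl

/-- If `V'` is 2-closed and for each target set `T ℓ` the whole of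
`V'` lies in the player-1 attractor (inside the induced subgame `Γ[V']`) of
`T ℓ ∩ V'`, then every vertex of `V'` is winning for player 1 for the
generalized Büchi objective. -/
theorem gen_buchi_soundness {V : Type u} [Finite V]
    (Γ : GameGraph V) (hΓ : Γ.NoDead) {k : ℕ} (T : Fin k → Set V)
    (V' : Set V) (hcl : Γ.PClosed Player.two V')
    (hattr : ∀ ℓ : Fin k, ∀ v, ∀ hv : v ∈ V',
      (⟨v, hv⟩ : ↥V') ∈ (Γ.sub V').attr Player.one {x : ↥V' | (x : V) ∈ T ℓ}) :
    ∀ v ∈ V', Γ.Wins Player.one (GenBuchiObj T) v := by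
  intro v₀ hv₀
  rcases Nat.eq_zero_or_pos k with rfl | hk
  · choose f hf using hΓ
    exact ⟨fun _ v => f v, fun _ v _ => hf v, fun τ _ i => i.elim0⟩
  have hr : ∀ ℓ : Fin k, ∃ r : V' → ℕ, ∀ v : V', (v : V) ∉ T ℓ →
      ((v : V) ∈ Γ.P1 → ∃ w : V', Γ.E v w ∧ r w < r v) ∧
      ((v : V) ∉ Γ.P1 → ∀ w : V', Γ.E v w → r w < r v) :=
    fun ℓ => gb_rank (Γ.sub V') {x : ↥V' | (x : V) ∈ T ℓ} (fun v => hattr ℓ v.1 v.2)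
  choose r hr using hr
  let e : ℕ → Fin k := fun c => ⟨c % k, Nat.mod_lt _ hk⟩
  have hs : ∀ (c : ℕ) (v : V), ∃ w, Γ.E v w ∧ (∀ hv : v ∈ V', v ∈ Γ.P1 →
      ∃ hw : w ∈ V', v ∉ T (e c) → r (e c) ⟨w, hw⟩ < r (e c) ⟨v, hv⟩) := by
    intro c v
    by_cases hv : v ∈ V'
    · by_cases hp : v ∈ Γ.P1
      · by_cases hT : v ∈ T (e c)
        · obtain ⟨w, hE, hw⟩ := (hcl v hv).2 hp
          exact ⟨w, hE, fun _ _ => ⟨hw, fun h => absurd hT h⟩⟩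
        · obtain ⟨w, hE, hw⟩ := (hr (e c) ⟨v, hv⟩ hT).1 hp
          exact ⟨w, hE, fun _ _ => ⟨w.2, fun _ => hw⟩⟩
      · obtain ⟨w, hw⟩ := hΓ v
        exact ⟨w, hw, fun _ h => absurd h hp⟩
    · obtain ⟨w, hw⟩ := hΓ v
      exact ⟨w, hw, fun h => absurd h hv⟩
  choose s hsE hs using hs
  let mem : List V → ℕ := fun h => h.foldl (fun c v => if v ∈ T (e c) then c + 1 else c) 0
  refine ⟨fun h v => s (mem h) v, fun h v _ => hsE _ _, fun τ hτ => ?_⟩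
  change Γ.play (fun h v => s (mem h) v) τ v₀ ∈ GenBuchiObj T
  let q := Γ.playAux (fun h v => s (mem h) v) τ v₀
  let c : ℕ → ℕ := fun n => mem (q n).1
  let x : ℕ → V := fun n => (q n).2
  have hc : ∀ n, c (n + 1) = if x n ∈ T (e (c n)) then c n + 1 else c n := by
    intro n
    change mem ((q n).1 ++ [(q n).2]) = _
    simp only [mem, List.foldl_append, List.foldl_cons, List.foldl_nil, c, x]
  have hx : ∀ n, x (n + 1) = if x n ∈ Γ.P1 then s (c n) (x n) else τ (q n).1 (x n) :=
    fun n => rfl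
  have hstep : ∀ n, ∀ hv : x n ∈ V', ∃ hw : x (n + 1) ∈ V', x n ∉ T (e (c n)) →
      r (e (c n)) ⟨x (n + 1), hw⟩ < r (e (c n)) ⟨x n, hv⟩ := by
    intro n hv
    by_cases hp : x n ∈ Γ.P1
    · have h1 : x (n + 1) = s (c n) (x n) := by rw [hx, if_pos hp]
      simp only [h1]
      exact hs (c n) (x n) hv hp
    · have h1 : Γ.E (x n) (x (n + 1)) := by
        rw [hx, if_neg hp]
        exact hτ _ _ hp
      have hw := (hcl _ hv).1 hp _ h1
      exact ⟨hw, fun hT => (hr _ ⟨x n, hv⟩ hT).2 hp ⟨_, hw⟩ h1⟩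
  have hin : ∀ n, x n ∈ V' := by
    intro n
    induction n with
    | zero => exact hv₀
    | succ n ih => exact (hstep n ih).1
  have hhit : ∀ d n, r (e (c n)) ⟨x n, hin n⟩ ≤ d →
      ∃ m, n ≤ m ∧ c m = c n ∧ x m ∈ T (e (c n)) := by
    intro d
    induction d with
    | zero =>
      intro n hn
      by_cases hT : x n ∈ T (e (c n))
      · exact ⟨n, le_rfl, rfl, hT⟩
      · obtain ⟨_, h⟩ := hstep n (hin n)
        have := h hT
        omega
    | succ d ih =>
      intro n hn
      by_cases hT : x n ∈ T (e (c n))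
      · exact ⟨n, le_rfl, rfl, hT⟩
      · obtain ⟨_, h⟩ := hstep n (hin n)
        have h3 := h hT
        have h4 : c (n + 1) = c n := by rw [hc, if_neg hT]
        obtain ⟨m, hm, hm1, hm2⟩ := ih (n + 1) (by rw [h4]; omega)
        rw [h4] at hm1 hm2
        exact ⟨m, by omega, hm1, hm2⟩
  have hall : ∀ j n, ∃ m, n ≤ m ∧ c m = c n + j := by
    intro j
    induction j with
    | zero => exact fun n => ⟨n, le_rfl, rfl⟩
    | succ j ih =>
      intro n
      obtain ⟨m, hm, hm1⟩ := ih n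
      obtain ⟨m', hm', h1, h2⟩ := hhit _ m le_rfl
      refine ⟨m' + 1, by omega, ?_⟩
      rw [← h1] at h2
      rw [hc, if_pos h2]
      omega
  intro i
  refine gb_inf x (T i) fun n => ?_
  have hmul : c n ≤ k * c n := Nat.le_mul_of_pos_left _ hk
  obtain ⟨m, hm, hm1⟩ := hall (k * c n + i - c n) n
  have h5 : c m = k * c n + i := by omega
  have h6 : e (c m) = i := by
    apply Fin.ext
    change c m % k = i
    rw [h5, Nat.mul_add_mod, Nat.mod_eq_of_lt i.2]
  obtain ⟨m', hm', _, h2⟩ := hhit _ m le_rfl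
  rw [h6] at h2
  exact ⟨m', by omega, h2⟩
end

section
/- Let Γ = ((V,E),(V₁,V₂)) be a game graph with hierarchical graph decomposition {G_i} and exception sets {Z_i}. For every i ≥ 1: if a set S ⊆ V is 1-closed in Γ and |Attr₂(Γ,S)| ≤ 2^i, then (i) the subgraphs induced by S in G_i and in G coincide (Γ_i[S] = Γ[S]), (ii) S ⊆ V ∖ Z_i, and (iii) S is 1-closed in Γ_i = (G_i,(V₁,V₂)). -/
open Classical

universe u

variable {V : Type u}

theorem hd_key {V : Type u} [Finite V]
    (Γ : GameGraph V) (H : HierDecomp Γ)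
    (i : ℕ) (S : Set V)
    (hsize : (Γ.attr Player.two S).ncard ≤ 2 ^ i) (u v : V) (hu : u ∉ Γ.P1) (hv : v ∈ S)
    (he : Γ.E u v) : H.idx v u < 2 ^ i := by
  have himg : H.idx v '' {u' | Γ.E u' v} = Set.Iio ({u' | Γ.E u' v}.ncard) := by
    apply Set.eq_of_subset_of_ncard_le
    · rintro _ ⟨w, hw, rfl⟩
      exact H.idx_lt v w hw
    · have hinj : Set.InjOn (H.idx v) {u' | Γ.E u' v} := fun a ha b hb h => H.idx_inj v a b ha hb h
      rw [hinj.ncard_image]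
      simp [Set.ncard_eq_toFinset_card']
    · exact Set.finite_Iio _
  have hsub : Set.Iic (H.idx v u) ⊆ H.idx v '' (Γ.attr Player.two S) := by
    intro k hk
    have hk' : k ∈ Set.Iio ({u' | Γ.E u' v}.ncard) := lt_of_le_of_lt hk (H.idx_lt v u he)
    rw [← himg] at hk'
    obtain ⟨w, hw, rfl⟩ := hk'
    refine ⟨w, ?_, rfl⟩
    have hw2 : w ∉ Γ.P1 := fun h1 =>
      absurd (H.p2_first v u w he hw hu h1) (not_lt.mpr hk)
    exact GameGraph.Attr.own (p := Player.two) hw2 hw (GameGraph.Attr.base hv)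
  have h1 := Set.ncard_le_ncard hsub (Set.toFinite _)
  have h2 := Set.ncard_image_le (f := H.idx v) (Set.toFinite (Γ.attr Player.two S))
  have h3 : (Set.Iic (H.idx v u)).ncard = H.idx v u + 1 := by
    simp [Set.ncard_eq_toFinset_card']
  omega

/-- If `S` is 1-closed in `Γ` and `|Attr₂(Γ,S)| ≤ 2^i`, then
(i) the subgraphs induced by `S` in `G_i` and in `G` coincide, (ii) `S` avoids
`Z_i`, and (iii) `S` is 1-closed in `Γ_i`. -/
theorem hier_decomp_closed_size {V : Type u} [Finite V]
    (Γ : GameGraph V) (hΓ : Γ.NoDead) (H : HierDecomp Γ)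
    (i : ℕ) (hi : 1 ≤ i) (S : Set V) (hcl : Γ.PClosed Player.one S)
    (hsize : (Γ.attr Player.two S).ncard ≤ 2 ^ i) :
    (∀ u ∈ S, ∀ v ∈ S, ((H.graph i).E u v ↔ Γ.E u v)) ∧
    S ⊆ (H.Z i)ᶜ ∧
    (H.graph i).PClosed Player.one S := by
  have h1 : ∀ u ∈ S, u ∈ Γ.P1 → Γ.outDeg u ≤ 2 ^ i := by
    intro u hu hp
    refine le_trans (Set.ncard_le_ncard (fun w hw => ?_) (Set.toFinite _)) hsize
    exact GameGraph.Attr.base ((hcl u hu).1 hp w hw)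
  have hE : ∀ u ∈ S, ∀ v ∈ S, ((H.graph i).E u v ↔ Γ.E u v) := by
    intro u hu v hv
    refine ⟨fun h => h.1, fun h => ⟨h, ?_⟩⟩
    by_cases hp : u ∈ Γ.P1
    · exact Or.inl (h1 u hu hp)
    · exact Or.inr (hd_key Γ H i S hsize u v hp hv h)
  refine ⟨hE, ?_, ?_⟩
  · rintro u hu (⟨hp, hn⟩ | ⟨hp, hn⟩)
    · obtain ⟨w, hw, hwS⟩ := (hcl u hu).2 hp
      exact hn ⟨w, (hE u hu w hwS).2 hw⟩
    · exact absurd (h1 u hu hp) (not_le.mpr hn)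
  · intro u hu
    refine ⟨fun hp w hw => (hcl u hu).1 hp w hw.1, fun hp => ?_⟩
    obtain ⟨w, hw, hwS⟩ := (hcl u hu).2 hp
    exact ⟨w, (hE u hu w hwS).2 hw, hwS⟩
end

section
/- Let Γ = ((V,E),(V₁,V₂)) be a game graph with hierarchical graph decomposition {G_i} and exception sets {Z_i}, and let T ⊆ V be a target set. For every i > 1: if the set S = V ∖ Attr₁(Γ_i, T ∪ Z_i) is nonempty but V ∖ Attr₁(Γ_{i−1}, T ∪ Z_{i−1}) is empty, then |Attr₂(Γ, S)| > 2^{i−1}. -/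
open Classical

universe u

variable {V : Type u}

/-- If `S = V ∖ Attr₁(Γ_i, T ∪ Z_i)` is nonempty but
`V ∖ Attr₁(Γ_{i−1}, T ∪ Z_{i−1})` is empty (for `i > 1`), then
`|Attr₂(Γ, S)| > 2^{i−1}`. -/
theorem hier_decomp_dominion_size {V : Type u} [Finite V]
    (Γ : GameGraph V) (hΓ : Γ.NoDead) (H : HierDecomp Γ)
    (T : Set V) (i : ℕ) (hi : 1 < i)
    (hS : (((H.graph i).attr Player.one (T ∪ H.Z i))ᶜ).Nonempty)
    (hprev : ((H.graph (i - 1)).attr Player.one (T ∪ H.Z (i - 1)))ᶜ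
        = (∅ : Set V)) :
    2 ^ (i - 1) <
      (Γ.attr Player.two (((H.graph i).attr Player.one (T ∪ H.Z i))ᶜ)).ncard := by
  obtain ⟨k, rfl⟩ : ∃ k, i = k + 1 := ⟨i - 1, by omega⟩
  simp only [Nat.add_sub_cancel] at *
  have hpow : (2 : ℕ) ^ k ≤ 2 ^ (k + 1) := Nat.pow_le_pow_right (by norm_num) (by omega)
  set S : Set V := ((H.graph (k + 1)).attr Player.one (T ∪ H.Z (k + 1)))ᶜ with hSdef
  have memS : ∀ v, v ∈ S ↔ ¬ (H.graph (k + 1)).Attr Player.one (T ∪ H.Z (k + 1)) v :=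
    fun v => Iff.rfl
  have hSA : S ⊆ Γ.attr Player.two S := fun v hv => GameGraph.Attr.base hv
  by_contra hlt
  have hcard : (Γ.attr Player.two S).ncard ≤ 2 ^ k := not_lt.mp hlt
  have hT : ∀ v ∈ S, v ∉ T := fun v hv hvT => (memS v).1 hv (.base (Or.inl hvT))
  have hZ : ∀ v ∈ S, v ∉ H.Z (k + 1) := fun v hv hvT => (memS v).1 hv (.base (Or.inr hvT))
  have hP1 : ∀ v ∈ S, v ∈ Γ.P1 → ∀ w, Γ.E v w → w ∈ S := by
    intro v hv h1 w hw
    rw [memS]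
    intro hA
    have hd : Γ.outDeg v ≤ 2 ^ (k + 1) := by
      by_contra hd
      exact hZ v hv (Or.inr ⟨h1, not_le.mp hd⟩)
    exact (memS v).1 hv (.own (w := w) h1 ⟨hw, Or.inl hd⟩ hA)
  have hP1d : ∀ v ∈ S, v ∈ Γ.P1 → Γ.outDeg v ≤ 2 ^ k := by
    intro v hv h1
    refine le_trans (Set.ncard_le_ncard ?_ (Set.toFinite _)) hcard
    exact fun w hw => hSA (hP1 v hv h1 w hw)
  have hP2 : ∀ v ∈ S, v ∉ Γ.P1 → ∃ w ∈ S, (H.graph k).E v w := by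
    intro v hv h2
    have : ∃ w ∈ S, (H.graph (k + 1)).E v w := by
      by_contra hcon
      push Not at hcon
      refine (memS v).1 hv (.opp h2 ?_)
      intro w hw
      by_contra hA
      exact hcon w hA hw
    obtain ⟨w, hw, he, -⟩ := this
    refine ⟨w, hw, he, ?_⟩
    right
    by_contra hidx
    have hidx : 2 ^ k ≤ H.idx w v := not_lt.mp hidx
    set I : Set V := {u | Γ.E u w} with hI
    have himg : H.idx w '' I = Set.Iio I.ncard := by
      refine Set.eq_of_subset_of_ncard_le ?_ ?_ (Set.finite_Iio _)
      · rintro _ ⟨u, hu, rfl⟩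
        exact H.idx_lt w u hu
      · have hinj : Set.InjOn (H.idx w) I := fun a ha b hb h => H.idx_inj w a b ha hb h
        rw [hinj.ncard_image]
        simp [Set.ncard_eq_toFinset_card']
    have hsub : Set.Iic (H.idx w v) ⊆ H.idx w '' (Γ.attr Player.two S) := by
      intro n hn
      have : n ∈ H.idx w '' I := by
        rw [himg]
        exact lt_of_le_of_lt hn (H.idx_lt w v he)
      obtain ⟨u, hu, rfl⟩ := this
      refine ⟨u, ?_, rfl⟩
      refine .own (w := w) (?_ : u ∉ Γ.P1) hu (hSA hw)
      intro hu1
      exact absurd (H.p2_first w v u he hu h2 hu1) (not_lt.mpr hn)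
    have h1 := Set.ncard_le_ncard hsub (Set.toFinite _)
    have h2 := Set.ncard_image_le (f := H.idx w) (Set.toFinite (Γ.attr Player.two S))
    have h3 : (Set.Iic (H.idx w v)).ncard = H.idx w v + 1 := by
      simp [Set.ncard_eq_toFinset_card']
    omega
  have key : ∀ v, (H.graph k).Attr Player.one (T ∪ H.Z k) v → v ∉ S := by
    intro v hv
    induction hv with
    | base h =>
      rename_i v
      intro hvS
      rcases h with h | ⟨h2, h⟩ | ⟨h1, h⟩
      · exact hT v hvS h
      · obtain ⟨w, -, hw⟩ := hP2 v hvS h2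
        exact h ⟨w, hw⟩
      · exact absurd (hP1d v hvS h1) (not_le.mpr h)
    | own h1 he _ ih => exact fun hvS => ih (hP1 _ hvS h1 _ he.1)
    | opp h2 _ ih =>
      intro hvS
      obtain ⟨w, hwS, hw⟩ := hP2 _ hvS h2
      exact ih w hw hwS
  obtain ⟨v, hv⟩ := hS
  refine key v ?_ hv
  by_contra hA
  have : v ∈ (∅ : Set V) := hprev ▸ hA
  exact this
end

section
/- Let S₁, S₂ be finite sets of d-dimensional Boolean vectors (d ≥ 1) such that S₁ is nonempty, every vector in S₁ has at least one coordinate equal to 1, and the all-ones vector belongs to S₂. Let Γ be the game graph with vertices {s} ∪ S₁ ∪ S₂ ∪ {c₁,…,c_d}, where s belongs to player 2 and all other vertices to player 1, and with edges: s → x for every x ∈ S₁; x → c_i iff x_i = 1 (for x ∈ S₁); c_i → y iff y_i = 1 (for y ∈ S₂); and y → s for every y ∈ S₂. Consider the generalized Büchi objective ⋀_{y∈S₂} Büchi({y}) for player 1. Then the following are equivalent: (1) there exist x ∈ S₁ and y ∈ S₂ that are orthogonal, i.e., there is no coordinate i with x_i = y_i = 1; (2) s is not in the winning set of player 1; (3)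 the winning set of player 1 is empty. -/
open Classical

universe u

variable {V : Type u}

/-- The vertex set of the orthogonal-vectors reduction: a start vertex `s`,
a copy of `S₁`, the coordinate vertices `c_1, …, c_d`, and a copy of `S₂`. -/
abbrev OVVert (d : ℕ) (S₁ S₂ : Set (Fin d → Bool)) : Type :=
  Unit ⊕ (↥S₁ ⊕ (Fin d ⊕ ↥S₂))

/-- The edge relation of the orthogonal-vectors reduction. -/
def ovE {d : ℕ} (S₁ S₂ : Set (Fin d → Bool)) :
    OVVert d S₁ S₂ → OVVert d S₁ S₂ → Prop
  | Sum.inl _, Sum.inr (Sum.inl _) => True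
  | Sum.inr (Sum.inl x), Sum.inr (Sum.inr (Sum.inl i)) =>
      (x : Fin d → Bool) i = true
  | Sum.inr (Sum.inr (Sum.inl i)), Sum.inr (Sum.inr (Sum.inr y)) =>
      (y : Fin d → Bool) i = true
  | Sum.inr (Sum.inr (Sum.inr _)), Sum.inl _ => True
  | _, _ => False

/-- The game graph of the orthogonal-vectors reduction: the start vertex `s`
belongs to player 2 and all other vertices to player 1. -/
def ovGame {d : ℕ} (S₁ S₂ : Set (Fin d → Bool)) :
    GameGraph (OVVert d S₁ S₂) where
  E := ovE S₁ S₂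
  P1 := {w | w ≠ Sum.inl ()}

theorem ovAux_len {V : Type u} (Γ : GameGraph V) (σ π : Strat V) (v : V) (n : ℕ) :
    (Γ.playAux σ π v n).1.length = n := by
  induction n with
  | zero => rfl
  | succ n ih => simp [GameGraph.playAux, ih]

theorem ovAux_succ {V : Type u} (Γ : GameGraph V) (σ π : Strat V) (v : V) (n : ℕ) :
    ∃ h : List V, h.length = n ∧
      Γ.play σ π v (n + 1) =
        if Γ.play σ π v n ∈ Γ.P1 then σ h (Γ.play σ π v n) else π h (Γ.play σ π v n) :=
  ⟨(Γ.playAux σ π v n).1, ovAux_len Γ σ π v n, rfl⟩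

theorem ovAux_edge {V : Type u} (Γ : GameGraph V) (σ π : Strat V) (v : V)
    (hσ : Γ.ValidFor Player.one σ) (hπ : Γ.ValidFor Player.two π) (n : ℕ) :
    Γ.E (Γ.play σ π v n) (Γ.play σ π v (n + 1)) := by
  obtain ⟨h, -, he⟩ := ovAux_succ Γ σ π v n
  rw [he]
  split_ifs with hp
  · exact hσ h _ hp
  · exact hπ h _ hp

theorem ovAux_lose {d : ℕ} (S₁ S₂ : Set (Fin d → Bool))
    (x : ↥S₁) (y : ↥S₂) (hxy : ∀ i, ¬ (x.1 i = true ∧ y.1 i = true)) (w : OVVert d S₁ S₂) :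
    ¬ (ovGame S₁ S₂).Wins Player.one
          (GenBuchiObj fun y : ↥S₂ =>
            ({Sum.inr (Sum.inr (Sum.inr y))} : Set (OVVert d S₁ S₂))) w := by
  rintro ⟨σ, hσ, hw⟩
  let π : Strat (OVVert d S₁ S₂) := fun _ _ => Sum.inr (Sum.inl x)
  have hπ : (ovGame S₁ S₂).ValidFor Player.two π := by
    intro h v hv
    have hv' : v = Sum.inl () := by
      by_contra hne
      exact hv hne
    subst hv'
    trivial
  have hpl : (ovGame S₁ S₂).play σ π w ∈ (GenBuchiObj fun y : ↥S₂ =>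
            ({Sum.inr (Sum.inr (Sum.inr y))} : Set (OVVert d S₁ S₂))) := hw π hπ
  obtain ⟨v, hv, hvy⟩ := hpl y
  have hvy' : v = Sum.inr (Sum.inr (Sum.inr y)) := hvy
  subst hvy'
  obtain ⟨m, hm, hmy⟩ := hv 3
  obtain ⟨k, rfl⟩ := Nat.exists_eq_add_of_le' hm
  have e0 := ovAux_edge _ σ π w hσ hπ k
  have e1 := ovAux_edge _ σ π w hσ hπ (k + 1)
  have e2 := ovAux_edge _ σ π w hσ hπ (k + 2)
  obtain ⟨h, -, hs⟩ := ovAux_succ (ovGame S₁ S₂) σ π w k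
  change (ovGame S₁ S₂).play σ π w (k + 2 + 1) = _ at hmy
  rw [hmy] at e2
  change (ovGame S₁ S₂).E _ ((ovGame S₁ S₂).play σ π w (k + 2)) at e1
  generalize (ovGame S₁ S₂).play σ π w (k + 2) = c at *
  generalize (ovGame S₁ S₂).play σ π w (k + 1) = b at *
  generalize (ovGame S₁ S₂).play σ π w k = a at *
  rcases c with c | c | c | c
  · exact e2
  · exact e2
  · rcases b with b | b | b | b
    · exact e1
    · rcases a with a | a | a | a
      · have : ¬ ((Sum.inl a : OVVert d S₁ S₂) ∈ (ovGame S₁ S₂).P1) := fun h => h rfl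
        rw [if_neg this] at hs
        have hbx : b = x := by simpa [π] using hs
        subst hbx
        exact hxy c ⟨e1, e2⟩
      · exact e0
      · exact e0
      · exact e0
    · exact e1
    · exact e1
  · exact e2

theorem ovAux_win {d : ℕ} (S₁ S₂ : Set (Fin d → Bool))
    (hones : (fun _ => true) ∈ S₂)
    (hno : ∀ (x : ↥S₁) (y : ↥S₂), ∃ i, x.1 i = true ∧ y.1 i = true) :
    (ovGame S₁ S₂).Wins Player.one
          (GenBuchiObj fun y : ↥S₂ =>
            ({Sum.inr (Sum.inr (Sum.inr y))} : Set (OVVert d S₁ S₂))) (Sum.inl ()) := by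
  choose c hc using hno
  haveI : Nonempty ↥S₂ := ⟨⟨_, hones⟩⟩
  obtain ⟨g, hg⟩ := exists_surjective_nat ↥S₂
  let f : ℕ → ↥S₂ := fun k => g k.unpair.1
  let σ : Strat (OVVert d S₁ S₂) := fun h v =>
    match v with
    | Sum.inl _ => Sum.inl ()
    | Sum.inr (Sum.inl x) => Sum.inr (Sum.inr (Sum.inl (c x (f (h.length / 4)))))
    | Sum.inr (Sum.inr (Sum.inl i)) =>
        Sum.inr (Sum.inr (Sum.inr
          (if (f (h.length / 4)).1 i = true then f (h.length / 4) else ⟨_, hones⟩)))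
    | Sum.inr (Sum.inr (Sum.inr _)) => Sum.inl ()
  refine ⟨σ, ?_, ?_⟩
  · rintro h (v | v | v | v) hv
    · exact absurd rfl hv
    · exact (hc _ _).1
    · change (if (f (h.length / 4)).1 v = true then f (h.length / 4) else
        (⟨_, hones⟩ : ↥S₂)).1 v = true
      split_ifs with hh
      · exact hh
      · rfl
    · trivial
  · intro π hπ
    change (ovGame S₁ S₂).play σ π (Sum.inl ()) ∈ _
    set p := (ovGame S₁ S₂).play σ π (Sum.inl ()) with hp
    have key : ∀ k, p (4 * k) = Sum.inl () →
        p (4 * k + 3) = Sum.inr (Sum.inr (Sum.inr (f k))) ∧ p (4 * k + 4) = Sum.inl () := by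
      intro k h0
      obtain ⟨l0, hl0, e0⟩ := ovAux_succ (ovGame S₁ S₂) σ π (Sum.inl ()) (4 * k)
      obtain ⟨l1, hl1, e1⟩ := ovAux_succ (ovGame S₁ S₂) σ π (Sum.inl ()) (4 * k + 1)
      obtain ⟨l2, hl2, e2⟩ := ovAux_succ (ovGame S₁ S₂) σ π (Sum.inl ()) (4 * k + 2)
      obtain ⟨l3, hl3, e3⟩ := ovAux_succ (ovGame S₁ S₂) σ π (Sum.inl ()) (4 * k + 3)
      rw [← hp] at e0 e1 e2 e3
      have hns : ¬ ((Sum.inl () : OVVert d S₁ S₂) ∈ (ovGame S₁ S₂).P1) := fun h => h rfl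
      have hin : ∀ z, ((Sum.inr z : OVVert d S₁ S₂) ∈ (ovGame S₁ S₂).P1) :=
        fun z h => by cases h
      rw [h0, if_neg hns] at e0
      have hE : (ovGame S₁ S₂).E (Sum.inl ()) (π l0 (Sum.inl ())) := hπ l0 _ hns
      obtain ⟨x, hx⟩ : ∃ x, π l0 (Sum.inl ()) = Sum.inr (Sum.inl x) := by
        generalize π l0 (Sum.inl ()) = z at *
        rcases z with z | z | z | z
        · exact hE.elim
        · exact ⟨z, rfl⟩
        · exact hE.elim
        · exact hE.elim
      rw [hx] at e0
      rw [e0, if_pos (hin _)] at e1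
      have q1 : l1.length / 4 = k := by omega
      have q2 : l2.length / 4 = k := by omega
      have e1' : p (4 * k + 2) = Sum.inr (Sum.inr (Sum.inl (c x (f k)))) := by
        rw [e1]; simp only [σ, q1]
      rw [e1', if_pos (hin _)] at e2
      have e2' : p (4 * k + 3) = Sum.inr (Sum.inr (Sum.inr (f k))) := by
        rw [e2]; simp only [σ, q2, (hc x (f k)).2, if_true]
      rw [e2', if_pos (hin _)] at e3
      exact ⟨e2', e3⟩
    have hall : ∀ k, p (4 * k) = Sum.inl () := by
      intro k
      induction k with
      | zero => rfl
      | succ k ih => exact (key k ih).2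
    intro y
    refine ⟨Sum.inr (Sum.inr (Sum.inr y)), ?_, rfl⟩
    intro n
    obtain ⟨j, hj⟩ := hg y
    refine ⟨4 * Nat.pair j n + 3, ?_, ?_⟩
    · have := Nat.right_le_pair j n
      omega
    · rw [(key _ (hall _)).1]
      simp [f, hj]

/-- in the orthogonal-vectors reduction (with `S₁` nonempty,
every vector of `S₁` having some coordinate `1`, and the all-ones vector in
`S₂`), the following are equivalent for the generalized Büchi objective
`⋀_{y ∈ S₂} Büchi({y})`: (1) some `x ∈ S₁` and `y ∈ S₂` are orthogonal;
(2) `s` is not in the winning set of player 1; (3) the winning set of player 1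
is empty. -/
theorem ov_reduction {d : ℕ} (hd : 1 ≤ d) (S₁ S₂ : Set (Fin d → Bool))
    (h1 : S₁.Nonempty) (hnz : ∀ x ∈ S₁, ∃ i, x i = true)
    (hones : (fun _ => true) ∈ S₂) :
    ((∃ x ∈ S₁, ∃ y ∈ S₂, ∀ i, ¬ (x i = true ∧ y i = true)) ↔
      ¬ (ovGame S₁ S₂).Wins Player.one
          (GenBuchiObj fun y : ↥S₂ =>
            ({Sum.inr (Sum.inr (Sum.inr y))} : Set (OVVert d S₁ S₂)))
          (Sum.inl ())) ∧
    (¬ (ovGame S₁ S₂).Wins Player.one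
          (GenBuchiObj fun y : ↥S₂ =>
            ({Sum.inr (Sum.inr (Sum.inr y))} : Set (OVVert d S₁ S₂)))
          (Sum.inl ()) ↔
      ∀ w, ¬ (ovGame S₁ S₂).Wins Player.one
          (GenBuchiObj fun y : ↥S₂ =>
            ({Sum.inr (Sum.inr (Sum.inr y))} : Set (OVVert d S₁ S₂))) w) := by
  have h13 : (∃ x ∈ S₁, ∃ y ∈ S₂, ∀ i, ¬ (x i = true ∧ y i = true)) →
      ∀ w, ¬ (ovGame S₁ S₂).Wins Player.one
          (GenBuchiObj fun y : ↥S₂ =>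
            ({Sum.inr (Sum.inr (Sum.inr y))} : Set (OVVert d S₁ S₂))) w := by
    rintro ⟨x, hx, y, hy, hxy⟩ w
    exact ovAux_lose S₁ S₂ ⟨x, hx⟩ ⟨y, hy⟩ hxy w
  have h21 : ¬ (ovGame S₁ S₂).Wins Player.one
          (GenBuchiObj fun y : ↥S₂ =>
            ({Sum.inr (Sum.inr (Sum.inr y))} : Set (OVVert d S₁ S₂)))
          (Sum.inl ()) →
      (∃ x ∈ S₁, ∃ y ∈ S₂, ∀ i, ¬ (x i = true ∧ y i = true)) := by
    intro hw
    by_contra hno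
    apply hw
    apply ovAux_win S₁ S₂ hones
    intro x y
    by_contra hxy
    exact hno ⟨x.1, x.2, y.1, y.2, fun i hi => hxy ⟨i, hi⟩⟩
  exact ⟨⟨fun h => h13 h _, h21⟩, ⟨fun h => h13 (h21 h), fun h => h _⟩⟩
end

section
/- Let Γ = ((V,E),(V₁,V₂)) be a game graph with GR(1) objective given by target sets L₁,…,L_{k₁} and U₁,…,U_{k₂}. Every player-1 dominion D of the swapped game graph Γ̄ with respect to the generalized Büchi objective ⋀_{t=1}^{k₁} Büchi(L_t), for which there is an index 1 ≤ ℓ ≤ k₂ with D ∩ U_ℓ = ∅, is a player-2 dominion of Γ with respect to the GR(1) objective. -/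
open Classical

universe u

variable {V : Type u}

theorem swap_playAux_eq {V : Type u} (Γ : GameGraph V) (σ τ : Strat V) (v : V) (n : ℕ) :
    Γ.playAux τ σ v n = Γ.swap.playAux σ τ v n := by
  induction n with
  | zero => rfl
  | succ n ih =>
    simp only [GameGraph.playAux, ih, GameGraph.step, GameGraph.swap, Set.mem_compl_iff]
    split_ifs <;> simp_all

/-- every player-1 dominion `D` of the swapped game graph `Γ̄`
with respect to the generalized Büchi objective `⋀_t Büchi(L t)` that avoids
some guarantee set `U ℓ` is a player-2 dominion of `Γ` with respect to the
GR(1) objective. -/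
theorem gen_buchi_dominion_is_gr1_dominion {V : Type u} [Finite V]
    (Γ : GameGraph V) (hΓ : Γ.NoDead) {k₁ k₂ : ℕ}
    (L : Fin k₁ → Set V) (U : Fin k₂ → Set V) (D : Set V)
    (hD : Γ.swap.Dominion Player.one (GenBuchiObj L) D)
    (ℓ : Fin k₂) (hdis : D ∩ U ℓ = ∅) :
    Γ.Dominion Player.two (GR1Obj L U) D := by
  refine ⟨hD.1, fun v hv => ?_⟩
  obtain ⟨σ, hσ, h⟩ := hD.2 v hv
  refine ⟨σ, fun hist w hw => hσ hist w hw, fun τ hτ => ?_⟩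
  have hτ' : Γ.swap.ValidFor Player.one.opp τ := by
    intro hist w hw
    refine hτ hist w ?_
    have hw' : w ∈ (Γ.P1ᶜ)ᶜ := hw
    rw [compl_compl] at hw'
    exact hw'
  have heq : Γ.winPlay Player.two σ τ v = Γ.swap.winPlay Player.one σ τ v := by
    funext n
    exact congrArg Prod.snd (swap_playAux_eq Γ σ τ v n)
  obtain ⟨h1, h2⟩ := h τ hτ'
  rw [heq]
  refine ⟨?_, h2⟩
  intro hg
  obtain ⟨x, hx, hxU⟩ := hg h1 ℓ
  obtain ⟨m, -, hm⟩ := hx 0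
  have : x ∈ D ∩ U ℓ := ⟨hm ▸ h2 m, hxU⟩
  rw [hdis] at this
  exact this
end

section
/- Let Γ = ((V,E),(V₁,V₂)) be a game graph with GR(1) objective given by target sets L₁,…,L_{k₁} and U₁,…,U_{k₂}. Suppose that for every ℓ ∈ {1,…,k₂}, every vertex of V ∖ Attr₁(Γ,U_ℓ) is winning for player 1 in the game on the induced game graph Γ[V ∖ Attr₁(Γ,U_ℓ)] with the disjunctive co-Büchi objective ⋁_{t=1}^{k₁} coBüchi(L_t). Then every vertex of V is winning for player 1 in the game on Γ with the GR(1) objective. -/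
open Classical

universe u

variable {V : Type u}

section helpers

lemma attrIter_mono' (Γ : GameGraph V) (U : Set V) {m n : ℕ} (h : m ≤ n) :
    Γ.attrIter Player.one U m ⊆ Γ.attrIter Player.one U n := by
  induction h with
  | refl => exact subset_rfl
  | step _ ih =>
    intro v hv
    exact Or.inl (Or.inl (ih hv))

lemma attr_exists_iter [Finite V] (Γ : GameGraph V) (U : Set V) {v : V}
    (h : Γ.Attr Player.one U v) : ∃ n, v ∈ Γ.attrIter Player.one U n := by
  induction h with
  | base h => exact ⟨0, h⟩
  | own hv hE _ ih =>
    obtain ⟨n, hn⟩ := ih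
    exact ⟨n + 1, Or.inl (Or.inr ⟨hv, _, hE, hn⟩)⟩
  | opp hv _ ih =>
    choose! f hf using ih
    obtain ⟨B, hB⟩ := (Set.finite_range f).bddAbove
    exact ⟨B + 1, Or.inr ⟨hv, fun w hw =>
      attrIter_mono' Γ U (hB ⟨w, rfl⟩) (hf w hw)⟩⟩

lemma iter_attr (Γ : GameGraph V) (U : Set V) (n : ℕ) :
    ∀ v ∈ Γ.attrIter Player.one U n, Γ.Attr Player.one U v := by
  induction n with
  | zero => exact fun v hv => .base hv
  | succ n ih =>
    rintro v ((h | ⟨h1, w, h2, h3⟩) | ⟨h1, h2⟩)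
    · exact ih v h
    · exact .own h1 h2 (ih w h3)
    · exact .opp h1 fun w hw => ih w (h2 w hw)

lemma attr_rank [Finite V] (Γ : GameGraph V) (U : Set V) :
    ∃ r : V → ℕ, ∀ v, v ∈ Γ.attr Player.one U → v ∉ U →
      (v ∈ Γ.P1 → ∃ w, Γ.E v w ∧ w ∈ Γ.attr Player.one U ∧ r w < r v) ∧
      (v ∉ Γ.P1 → ∀ w, Γ.E v w → w ∈ Γ.attr Player.one U ∧ r w < r v) := by
  have key : ∀ v, ∃ n, v ∈ Γ.attr Player.one U →
      v ∈ Γ.attrIter Player.one U n ∧ ∀ m, v ∈ Γ.attrIter Player.one U m → n ≤ m := by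
    intro v
    by_cases h : v ∈ Γ.attr Player.one U
    · have h' := attr_exists_iter Γ U h
      exact ⟨Nat.find h', fun _ => ⟨Nat.find_spec h', fun m hm => Nat.find_min' h' hm⟩⟩
    · exact ⟨0, fun h' => absurd h' h⟩
  choose r hr using key
  refine ⟨r, fun v hv hU => ?_⟩
  obtain ⟨h1, h2⟩ := hr v hv
  rcases hn : r v with _ | n
  · rw [hn] at h1; exact absurd h1 hU
  rw [hn] at h1
  have sm : ∀ w, w ∈ Γ.attrIter Player.one U n →
      w ∈ Γ.attr Player.one U ∧ r w < n + 1 := fun w hw =>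
    ⟨iter_attr Γ U n w hw, Nat.lt_succ_of_le ((hr w (iter_attr Γ U n w hw)).2 n hw)⟩
  rcases h1 with (h | ⟨h1, w, h3, h4⟩) | ⟨h1, h3⟩
  · have := h2 n h; omega
  · exact ⟨fun _ => ⟨w, h3, sm w h4⟩, fun h => absurd h1 h⟩
  · exact ⟨fun h => absurd h h1, fun _ w hw => sm w (h3 w hw)⟩

lemma infOcc_of [Finite V] (ω : ℕ → V) (T : Set V)
    (h : ∀ n, ∃ m, n ≤ m ∧ ω m ∈ T) : (InfOcc ω ∩ T).Nonempty := by
  by_contra hc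
  have : ∀ v, ∃ n, v ∈ T → ∀ m, n ≤ m → ω m ≠ v := by
    intro v
    by_cases hv : v ∈ T
    · by_contra h'
      push Not at h'
      exact hc ⟨v, fun n => (h' n).2, hv⟩
    · exact ⟨0, fun h => absurd h hv⟩
  choose f hf using this
  obtain ⟨B, hB⟩ := (Set.finite_range f).bddAbove
  obtain ⟨m, hm, hT⟩ := h B
  exact hf _ hT m ((hB ⟨_, rfl⟩).trans hm) rfl

/-- Memory of the combined strategy. -/
abbrev Mem (Γ : GameGraph V) {k : ℕ} (U : Fin (k+1) → Set V) : Type _ :=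
  Σ ℓ : Fin (k+1), List ↥((Γ.attr Player.one (U ℓ))ᶜ)

/-- Memory update. -/
noncomputable def upd (Γ : GameGraph V) {k : ℕ} (U : Fin (k+1) → Set V)
    (s : Mem Γ U) (v : V) : Mem Γ U :=
  if v ∈ U s.1 then ⟨s.1 + 1, []⟩
  else if hA : v ∈ Γ.attr Player.one (U s.1) then ⟨s.1, []⟩
  else ⟨s.1, s.2 ++ [⟨v, hA⟩]⟩

/-- Move of the combined strategy. -/
noncomputable def mv (Γ : GameGraph V) {k : ℕ} (U : Fin (k+1) → Set V)
    (f : Fin (k+1) → V → V)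
    (S : ∀ ℓ : Fin (k+1), ↥((Γ.attr Player.one (U ℓ))ᶜ) →
      Strat ↥((Γ.attr Player.one (U ℓ))ᶜ))
    (s : Mem Γ U) (v : V) : V :=
  if hA : v ∈ Γ.attr Player.one (U s.1) then f s.1 v
  else (S s.1 (s.2.headD ⟨v, hA⟩) s.2 ⟨v, hA⟩ : V)

lemma sub_play (Γ : GameGraph V) {k : ℕ} (U : Fin (k+1) → Set V)
    (f : Fin (k+1) → V → V)
    (S : ∀ ℓ : Fin (k+1), ↥((Γ.attr Player.one (U ℓ))ᶜ) →
      Strat ↥((Γ.attr Player.one (U ℓ))ᶜ))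
    (ω : ℕ → V) (M : ℕ → Mem Γ U)
    (hM : ∀ n, M (n+1) = upd Γ U (M n) (ω n))
    (h1 : ∀ n, ω n ∈ Γ.P1 → ω (n+1) = mv Γ U f S (M n) (ω n))
    (h2 : ∀ n, ω n ∉ Γ.P1 → Γ.E (ω n) (ω (n+1)))
    (ℓ : Fin (k+1)) (h0 : M 0 = ⟨ℓ, []⟩)
    (hC : ∀ n, ω n ∈ (Γ.attr Player.one (U ℓ))ᶜ) :
    ∃ τ, (Γ.sub (Γ.attr Player.one (U ℓ))ᶜ).ValidFor Player.two τ ∧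
      ∀ n, (Γ.sub (Γ.attr Player.one (U ℓ))ᶜ).play (S ℓ ⟨ω 0, hC 0⟩) τ ⟨ω 0, hC 0⟩ n
        = ⟨ω n, hC n⟩ := by
  have hs : ∀ v : ↥((Γ.attr Player.one (U ℓ))ᶜ), ∃ w : ↥((Γ.attr Player.one (U ℓ))ᶜ),
      (v : V) ∉ Γ.P1 → Γ.E v w := by
    intro v
    by_contra hc
    push Not at hc
    refine v.2 (GameGraph.Attr.opp (hc v).1 fun w hw => ?_)
    by_contra hw'
    exact (hc ⟨w, hw'⟩).2 hw
  choose g hg using hs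
  let τ : Strat ↥((Γ.attr Player.one (U ℓ))ᶜ) := fun h v =>
    if Γ.E v (ω (h.length + 1)) then ⟨ω (h.length + 1), hC _⟩ else g v
  refine ⟨τ, ?_, ?_⟩
  · intro h v hv
    change Γ.E (v : V) (τ h v : V)
    by_cases hE : Γ.E v (ω (h.length + 1))
    · simp only [τ, if_pos hE]; exact hE
    · simp only [τ, if_neg hE]; exact hg v hv
  · set σ := S ℓ ⟨ω 0, hC 0⟩ with hσ
    have key : ∀ n, ∃ l, (Γ.sub (Γ.attr Player.one (U ℓ))ᶜ).playAux σ τ ⟨ω 0, hC 0⟩ n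
        = (l, ⟨ω n, hC n⟩) ∧ M n = ⟨ℓ, l⟩ ∧ l.length = n ∧
          l.headD ⟨ω n, hC n⟩ = ⟨ω 0, hC 0⟩ := by
      intro n
      induction n with
      | zero => exact ⟨[], rfl, h0, rfl, rfl⟩
      | succ n ih =>
        obtain ⟨l, e1, e2, e3, e4⟩ := ih
        refine ⟨l ++ [⟨ω n, hC n⟩], ?_, ?_, by simp [e3], ?_⟩
        · simp only [GameGraph.playAux, e1, Prod.mk.injEq, true_and]
          unfold GameGraph.step
          by_cases hp : ω n ∈ Γ.P1
          · refine (if_pos (c := (⟨ω n, hC n⟩ : ↥((Γ.attr Player.one (U ℓ))ᶜ)) ∈ (Γ.sub (Γ.attr Player.one (U ℓ))ᶜ).P1) hp).trans ?_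
            apply Subtype.ext
            have := h1 n hp
            rw [e2] at this
            unfold mv at this
            rw [dif_neg (hC n), e4] at this
            exact this.symm
          · refine (if_neg (c := (⟨ω n, hC n⟩ : ↥((Γ.attr Player.one (U ℓ))ᶜ)) ∈ (Γ.sub (Γ.attr Player.one (U ℓ))ᶜ).P1) hp).trans ?_
            simp only [τ, e3, if_pos (h2 n hp)]
        · rw [hM, e2]
          unfold upd
          have hA : ω n ∉ Γ.attr Player.one (U ℓ) := hC n
          rw [if_neg fun h => hA (.base h), dif_neg hA]
        · cases l with
          | nil => simpa using e4
          | cons a l => simpa using e4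
    intro n
    obtain ⟨l, e1, -⟩ := key n
    simp [GameGraph.play, e1]

lemma core [Finite V] (Γ : GameGraph V) {k k₁ : ℕ} (L : Fin k₁ → Set V)
    (U : Fin (k+1) → Set V)
    (f : Fin (k+1) → V → V) (r : Fin (k+1) → V → ℕ)
    (S : ∀ ℓ : Fin (k+1), ↥((Γ.attr Player.one (U ℓ))ᶜ) →
      Strat ↥((Γ.attr Player.one (U ℓ))ᶜ))
    (hf : ∀ ℓ v, v ∈ Γ.attr Player.one (U ℓ) → v ∉ U ℓ → v ∈ Γ.P1 →
      f ℓ v ∈ Γ.attr Player.one (U ℓ) ∧ r ℓ (f ℓ v) < r ℓ v)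
    (hr : ∀ ℓ v, v ∈ Γ.attr Player.one (U ℓ) → v ∉ U ℓ → v ∉ Γ.P1 →
      ∀ w, Γ.E v w → w ∈ Γ.attr Player.one (U ℓ) ∧ r ℓ w < r ℓ v)
    (hS : ∀ ℓ v τ, (Γ.sub (Γ.attr Player.one (U ℓ))ᶜ).ValidFor Player.two τ →
      (fun n => ((Γ.sub (Γ.attr Player.one (U ℓ))ᶜ).play (S ℓ v) τ v n : V))
        ∈ DisjCoBuchiObj L)
    (ω : ℕ → V) (M : ℕ → Mem Γ U) (ℓ₀ : Fin (k+1)) (h0 : M 0 = ⟨ℓ₀, []⟩)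
    (hM : ∀ n, M (n+1) = upd Γ U (M n) (ω n))
    (h1 : ∀ n, ω n ∈ Γ.P1 → ω (n+1) = mv Γ U f S (M n) (ω n))
    (h2 : ∀ n, ω n ∉ Γ.P1 → Γ.E (ω n) (ω (n+1))) :
    ω ∈ GR1Obj L U := by
  have hnU : ∀ n, ω n ∉ U (M n).1 → (M (n+1)).1 = (M n).1 := by
    intro n hn
    rw [hM]; unfold upd; rw [if_neg hn]; split_ifs <;> rfl
  have hyU : ∀ n, ω n ∈ U (M n).1 → M (n+1) = ⟨(M n).1 + 1, []⟩ := by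
    intro n hn
    rw [hM]; unfold upd; rw [if_pos hn]
  have hconst : ∀ n d, (∀ m, n ≤ m → m < n + d → ω m ∉ U (M m).1) →
      (M (n+d)).1 = (M n).1 := by
    intro n d
    induction d with
    | zero => intro _; rfl
    | succ d ih =>
      intro h
      rw [← ih fun m a b => h m a (by omega)]
      exact hnU (n + d) (h (n + d) (by omega) (by omega))
  by_cases hA : ∀ n, ∃ m, n ≤ m ∧ ω m ∈ U (M m).1
  · have hit : ∀ n, ∃ m, n ≤ m ∧ (M m).1 = (M n).1 ∧ ω m ∈ U (M m).1 := by
      intro n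
      have hm := hA n
      obtain ⟨a, b⟩ := Nat.find_spec hm
      refine ⟨Nat.find hm, a, ?_, b⟩
      obtain ⟨d, hd⟩ := Nat.exists_eq_add_of_le a
      rw [hd]
      refine hconst n d fun m c e h => ?_
      exact Nat.find_min hm (m := m) (by omega) ⟨c, h⟩
    have adv : ∀ n (j : ℕ), ∃ m, n ≤ m ∧ (M m).1 = (M n).1 + (Fin.ofNat (k+1) j) := by
      intro n j
      induction j with
      | zero => exact ⟨n, le_rfl, by ext; simp [Fin.val_add, Fin.ofNat, Nat.mod_eq_of_lt]⟩
      | succ j ih =>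
        obtain ⟨m, a, b⟩ := ih
        obtain ⟨m', c, d, e⟩ := hit m
        refine ⟨m' + 1, by omega, ?_⟩
        rw [hyU _ e]
        simp only [d, b]
        ext; simp [Fin.val_add, Fin.ofNat, add_assoc]
    intro _ ℓ
    apply infOcc_of
    intro n
    obtain ⟨m, a, b⟩ := adv n (ℓ - (M n).1).val
    obtain ⟨m', c, d, e⟩ := hit m
    refine ⟨m', a.trans c, ?_⟩
    rw [d, b] at e
    have : (M n).1 + Fin.ofNat (k+1) (ℓ - (M n).1).val = ℓ := by
      rw [show Fin.ofNat (k+1) (ℓ - (M n).1).val = ℓ - (M n).1 from Fin.ofNat_val_eq_self _]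
      exact add_sub_cancel _ _
    rwa [this] at e
  · push Not at hA
    obtain ⟨N, hN⟩ := hA
    obtain ⟨ℓ, hℓ⟩ : ∃ ℓ, ℓ = (M N).1 := ⟨_, rfl⟩
    have hmode : ∀ m, N ≤ m → (M m).1 = ℓ := by
      intro m hm
      obtain ⟨d, rfl⟩ := Nat.exists_eq_add_of_le hm
      rw [hℓ]; exact hconst N d fun m a _ => hN m a
    have hnoattr : ∀ c m, N ≤ m → r ℓ (ω m) = c → ω m ∉ Γ.attr Player.one (U ℓ) := by
      intro c
      induction c using Nat.strong_induction_on with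
      | _ c ih =>
        intro m hm hc ha
        have hu : ω m ∉ U ℓ := by have := hN m hm; rwa [hmode m hm] at this
        have : ω (m+1) ∈ Γ.attr Player.one (U ℓ) ∧ r ℓ (ω (m+1)) < r ℓ (ω m) := by
          by_cases hp : ω m ∈ Γ.P1
          · have e := h1 m hp
            unfold mv at e
            have hml := hmode m hm
            rw [dif_pos (by rw [hml]; exact ha), hml] at e
            rw [e]
            exact hf ℓ _ ha hu hp
          · exact hr ℓ _ ha hu hp _ (h2 m hp)
        exact ih _ (hc ▸ this.2) (m+1) (by omega) rfl this.1
    have hP : ∃ N, ∀ m, N ≤ m → (M m).1 = ℓ ∧ ω m ∉ Γ.attr Player.one (U ℓ) :=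
      ⟨N, fun m hm => ⟨hmode m hm, hnoattr _ m hm rfl⟩⟩
    obtain ⟨K, hK, hmin⟩ : ∃ K, (∀ m, K ≤ m → (M m).1 = ℓ ∧ ω m ∉ Γ.attr Player.one (U ℓ)) ∧
        ∀ K' < K, ¬ (∀ m, K' ≤ m → (M m).1 = ℓ ∧ ω m ∉ Γ.attr Player.one (U ℓ)) :=
      ⟨Nat.find hP, Nat.find_spec hP, fun K' h => Nat.find_min hP h⟩
    have hMK : M K = ⟨ℓ, []⟩ := by
      have hK1 := (hK K le_rfl).1
      rcases K with _ | K
      · rw [h0] at hK1 ⊢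
        simp only at hK1
        rw [hK1]
      · by_cases hu : ω K ∈ U (M K).1
        · rw [hyU K hu] at hK1 ⊢
          simp only at hK1
          rw [hK1]
        · have hl : (M K).1 = ℓ := by rw [← hnU K hu]; exact hK1
          have ha : ω K ∈ Γ.attr Player.one (U (M K).1) := by
            by_contra ha
            refine hmin K (by omega) fun m hm => ?_
            rcases hm.eq_or_lt with rfl | hm
            · exact ⟨hl, hl ▸ ha⟩
            · exact hK m hm
          rw [hM]; unfold upd; rw [if_neg hu, dif_pos ha, hl]
    obtain ⟨τ, hτ, hplay⟩ := sub_play Γ U f S (fun n => ω (K + n)) (fun n => M (K + n))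
      (fun n => hM _) (fun n => h1 _) (fun n => h2 _) ℓ hMK
      (fun n => (hK _ (by omega)).2)
    have := hS ℓ ⟨ω (K + 0), (hK _ (by omega)).2⟩ τ hτ
    simp only [hplay] at this
    obtain ⟨t, ht⟩ := this
    intro hL
    exfalso
    obtain ⟨v, hv, hvL⟩ := hL t
    have : v ∈ InfOcc (fun n => ω (K + n)) ∩ L t := by
      refine ⟨fun n => ?_, hvL⟩
      obtain ⟨m, a, b⟩ := hv (K + n)
      exact ⟨m - K, by omega, by simpa [show K + (m - K) = m by omega] using b⟩
    rw [ht] at this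
    exact this

end helpers

theorem gr1_win_everywhere {V : Type u} [Finite V]
    (Γ : GameGraph V) (hΓ : Γ.NoDead) {k₁ k₂ : ℕ}
    (L : Fin k₁ → Set V) (U : Fin k₂ → Set V)
    (hyp : ∀ ℓ : Fin k₂, ∀ v : ↥((Γ.attr Player.one (U ℓ))ᶜ),
      (Γ.sub (Γ.attr Player.one (U ℓ))ᶜ).Wins Player.one
        (subObj (Γ.attr Player.one (U ℓ))ᶜ (DisjCoBuchiObj L)) v) :
    ∀ v, Γ.Wins Player.one (GR1Obj L U) v := by
  intro v
  rcases k₂ with _ | k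
  · choose s hs using hΓ
    exact ⟨fun _ v => s v, fun _ v _ => hs v, fun τ _ _ ℓ => ℓ.elim0⟩
  choose S hSv hS using hyp
  choose r hr using fun ℓ => attr_rank Γ (U ℓ)
  have hfe : ∀ ℓ v, ∃ w, Γ.E v w ∧ (v ∈ Γ.attr Player.one (U ℓ) → v ∉ U ℓ → v ∈ Γ.P1 →
      w ∈ Γ.attr Player.one (U ℓ) ∧ r ℓ w < r ℓ v) := by
    intro ℓ v
    by_cases h : v ∈ Γ.attr Player.one (U ℓ) ∧ v ∉ U ℓ ∧ v ∈ Γ.P1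
    · obtain ⟨w, a, b⟩ := (hr ℓ v h.1 h.2.1).1 h.2.2
      exact ⟨w, a, fun _ _ _ => b⟩
    · obtain ⟨w, hw⟩ := hΓ v
      exact ⟨w, hw, fun a b c => absurd ⟨a, b, c⟩ h⟩
  choose f hfE hf using hfe
  refine ⟨fun h v => mv Γ U f S (h.foldl (upd Γ U) ⟨0, []⟩) v, ?_, ?_⟩
  · intro h v hv
    change Γ.E v (mv Γ U f S _ v)
    unfold mv
    split_ifs with hA
    · exact hfE _ _
    · exact hSv _ _ _ ⟨v, hA⟩ hv
  · intro τ hτ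
    set σ : Strat V := fun h v => mv Γ U f S (h.foldl (upd Γ U) ⟨0, []⟩) v with hσ
    refine core Γ L U f r S hf (fun ℓ v a b => (hr ℓ v a b).2) (fun ℓ v τ h => hS ℓ v τ h)
      (Γ.play σ τ v)
      (fun n => (Γ.playAux σ τ v n).1.foldl (upd Γ U) ⟨0, []⟩) 0 rfl ?_ ?_ ?_
    · intro n
      simp [GameGraph.playAux, GameGraph.play, List.foldl_append]
    · intro n hn
      change Γ.step σ τ _ _ = _
      unfold GameGraph.step
      exact if_pos (c := (Γ.playAux σ τ v n).2 ∈ Γ.P1) hn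
    · intro n hn
      change Γ.E _ (Γ.step σ τ _ _)
      unfold GameGraph.step
      rw [if_neg (c := (Γ.playAux σ τ v n).2 ∈ Γ.P1) hn]
      exact hτ _ _ hn
end
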